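/- arXiv:1712.01542 — 5 statements merged into one kernel-verified Lean document; each statement's English description precedes it below -/
import Mathlib

section
/- Let T be a finite-dimensional nilpotent Lie algebra over a field F of nilpotency class 3 with dim [T,T] = 2 such that T is stem (i.e. Z(T) ⊆ [T,T]). Then T is capable if and only if T is isomorphic to L_{4,3} or to L_{5,5}. -/
open Module

universe u

/-- A witness to the capability of a Lie algebra `L` over `F`: a Lie algebra `E`
together with an isomorphism `L ≃ E ⧸ Z(E)`. -/
structure CapableWitness (F : Type u) (L : Type u) [Field F] [LieRing L] [LieAlgebra F L] where
  carrier : Type u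
  [lieRing : LieRing carrier]
  [lieAlgebra : LieAlgebra F carrier]
  equiv : L ≃ₗ⁅F⁆ (carrier ⧸ LieAlgebra.center F carrier)

/-- A Lie algebra `L` over a field `F` is capable if there exists a Lie algebra `E` over `F`
with `L ≅ E ⧸ Z(E)`. -/
def IsCapable (F : Type u) (L : Type u) [Field F] [LieRing L] [LieAlgebra F L] : Prop :=
  Nonempty (CapableWitness F L)

/-- `L` is isomorphic to `L_{4,3}`: basis `x₁,…,x₄` with `[x₁,x₂]=x₃`, `[x₁,x₃]=x₄` and all other brackets of basis vectors zero. -/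
def IsL43 (F : Type u) (L : Type u) [Field F] [LieRing L] [LieAlgebra F L] : Prop :=
  ∃ b : Basis (Fin 4) F L,
    ⁅b 0, b 1⁆ = b 2 ∧
    ⁅b 0, b 2⁆ = b 3 ∧
    ∀ i j : Fin 4, i < j → (i, j) ≠ (0, 1) → (i, j) ≠ (0, 2) → ⁅b i, b j⁆ = 0

/-- `L` is isomorphic to `L_{5,5}`: basis `x₁,…,x₅` with `[x₁,x₂]=x₃`, `[x₁,x₃]=x₅`, `[x₂,x₄]=x₅`. -/
def IsL55 (F : Type u) (L : Type u) [Field F] [LieRing L] [LieAlgebra F L] : Prop :=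
  ∃ b : Basis (Fin 5) F L,
    ⁅b 0, b 1⁆ = b 2 ∧
    ⁅b 0, b 2⁆ = b 4 ∧
    ⁅b 1, b 3⁆ = b 4 ∧
    ∀ i j : Fin 5, i < j → (i, j) ≠ (0, 1) → (i, j) ≠ (0, 2) → (i, j) ≠ (1, 3) → ⁅b i, b j⁆ = 0

/-!
A Lie algebra `L` is capable iff some 2-cocycle with trivial coefficients has no nonzero central
element in its radical: this says that the kernel of the extension of `L` by the cocycle is the
whole center. For `L_{4,3}` and `L_{5,5}`, with dual bases `e₁, e₂, …`, the cocycles `e₁ ∧ e₄` and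
`e₁ ∧ e₅ + e₃ ∧ e₄` do this.

For the other direction, choose `x` and `y` with `c = ⁅x, ⁅x, y⁆⁆ ≠ 0` and `⁅y, ⁅x, y⁆⁆ = 0`, so
that `⁅x, y⁆` and the central element `c` span the derived subalgebra. The cocycle identity puts
every bracket of two elements of the centralizer `C(x)` in the radical of every cocycle. In the
capable case `C(x)` is therefore abelian, so that an element of `C(x)` commuting with `y` is
central, hence in the derived subalgebra, hence a multiple of `c`. Every element of `L` is a
combination of `x`, `y`, `⁅x, y⁆` and some `w ∈ C(x)` with `⁅y, w⁆ ∈ F c`; if all these `⁅y, w⁆`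
vanish, `L` is `L_{4,3}`, and otherwise one `w` with `⁅y, w⁆ = c` completes a basis as in `L_{5,5}`.
-/

namespace LieCapability

open Function LieModule.Cohomology

section Center

variable {R L E : Type*} [CommRing R] [LieRing L] [LieAlgebra R L] [LieRing E] [LieAlgebra R E]

theorem lie_eq_lie_of_ker_le_center {f : E →ₗ⁅R⁆ L} (hf : f.ker ≤ LieAlgebra.center R E)
    {a b : E} (hab : f a = f b) (e : E) : ⁅e, a⁆ = ⁅e, b⁆ := by
  have hmem : a - b ∈ LieAlgebra.center R E :=
    hf <| LieHom.mem_ker.2 <| by rw [map_sub, hab, sub_self]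
  rw [← sub_eq_zero, ← lie_sub]
  exact (LieModule.mem_maxTrivSubmodule R E E _).1 hmem e

end Center

section TrivialCocycle

variable {R L M : Type*} [CommRing R] [LieRing L] [LieAlgebra R L] [AddCommGroup M] [Module R M]
  [LieRingModule L M] [LieModule R L M]

/-- The projection onto `L` of the extension of `L` by `M` defined by a 2-cocycle. Unlike
`LieAlgebra.Extension.ofTwoCocycle`, it does not ask for a Lie bracket on `M`. -/
def twoCocycleProj (c : twoCocycle R L M) : LieAlgebra.ofTwoCocycle c →ₗ⁅R⁆ L where
  toFun p := ((LieAlgebra.ofProd c).symm p).1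
  map_add' _ _ := by simp
  map_smul' _ _ := by simp
  map_lie' := by simp [LieAlgebra.bracket_ofTwoCocycle]

theorem twoCocycleProj_surjective (c : twoCocycle R L M) : Surjective (twoCocycleProj c) :=
  fun x ↦ ⟨LieAlgebra.ofProd c (x, 0), rfl⟩

variable [LieModule.IsTrivial L M]

theorem twoCocycle_apply_lie (c : twoCocycle R L M) (x y z : L) :
    c.1 x ⁅y, z⁆ = c.1 ⁅x, y⁆ z + c.1 y ⁅x, z⁆ :=
  (mem_twoCocycle_iff_of_trivial R L M c.1).1 c.2 x y z

theorem twoCocycle_apply_lie_eq_zero (c : twoCocycle R L M) {x y z : L} (hxy : ⁅x, y⁆ = 0)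
    (hxz : ⁅x, z⁆ = 0) : c.1 x ⁅y, z⁆ = 0 := by
  rw [twoCocycle_apply_lie, hxy, hxz, map_zero, map_zero, LinearMap.zero_apply, add_zero]

theorem mem_center_ofTwoCocycle_iff (c : twoCocycle R L M) (p : LieAlgebra.ofTwoCocycle c) :
    p ∈ LieAlgebra.center R (LieAlgebra.ofTwoCocycle c) ↔
      twoCocycleProj c p ∈ LieAlgebra.center R L ∧ ∀ x, c.1 x (twoCocycleProj c p) = 0 := by
  have lie_eq (q : LieAlgebra.ofTwoCocycle c) : ⁅q, p⁆ =
      LieAlgebra.ofProd c (⁅twoCocycleProj c q, twoCocycleProj c p⁆,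
        c.1 (twoCocycleProj c q) (twoCocycleProj c p)) := by
    rw [LieAlgebra.bracket_ofTwoCocycle, trivial_lie_zero L M, trivial_lie_zero L M, add_zero,
      sub_zero]
    rfl
  have lie_eq_zero_iff (q : LieAlgebra.ofTwoCocycle c) : ⁅q, p⁆ = 0 ↔
      ⁅twoCocycleProj c q, twoCocycleProj c p⁆ = 0 ∧
        c.1 (twoCocycleProj c q) (twoCocycleProj c p) = 0 := by
    rw [lie_eq, ← LieAlgebra.of_zero, (LieAlgebra.ofProd c).injective.eq_iff, Prod.mk_eq_zero]
  simp only [LieModule.mem_maxTrivSubmodule, lie_eq_zero_iff,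
    (twoCocycleProj_surjective c).forall, forall_and]

end TrivialCocycle

section Capable

variable {F L : Type u} [Field F] [LieRing L] [LieAlgebra F L]

theorem isCapable_iff_exists_surjective : IsCapable F L ↔
    ∃ (E : Type u) (_ : LieRing E) (_ : LieAlgebra F E) (f : E →ₗ⁅F⁆ L),
      Surjective f ∧ f.ker = LieAlgebra.center F E := by
  constructor
  · rintro ⟨⟨E, φ⟩⟩
    let q : E →ₗ⁅F⁆ E ⧸ LieAlgebra.center F E :=
      { (LieSubmodule.Quotient.mk' (LieAlgebra.center F E)).toLinearMap with
        map_lie' := LieSubmodule.Quotient.mk_bracket _ _ _ }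
    refine ⟨E, inferInstance, inferInstance, φ.symm.toLieHom.comp q,
      φ.symm.surjective.comp (LieSubmodule.Quotient.surjective_mk' _), ?_⟩
    ext e
    have hφ : φ.symm (q e) = 0 ↔ q e = 0 :=
      map_eq_zero_iff φ.symm.toLieHom φ.symm.injective
    exact hφ.trans (LieSubmodule.Quotient.mk_eq_zero _)
  · rintro ⟨E, _, _, f, hf, hker⟩
    have e := f.quotKerEquivRange
    rw [hker, (LieHom.range_eq_top f).2 hf] at e
    exact ⟨⟨E, (e.trans LieSubalgebra.topEquiv).symm⟩⟩

theorem isCapable_of_twoCocycle {M : Type u} [AddCommGroup M] [Module F M] [LieRingModule L M]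
    [LieModule F L M] [LieModule.IsTrivial L M] (c : twoCocycle F L M)
    (hc : ∀ z ∈ LieAlgebra.center F L, (∀ x, c.1 x z = 0) → z = 0) : IsCapable F L := by
  refine isCapable_iff_exists_surjective.2 ⟨LieAlgebra.ofTwoCocycle c, inferInstance,
    inferInstance, twoCocycleProj c, twoCocycleProj_surjective c, ?_⟩
  ext p
  rw [LieHom.mem_ker, mem_center_ofTwoCocycle_iff]
  exact ⟨fun hp ↦ by simp [hp], fun hp ↦ hc _ hp.1 hp.2⟩

/-- For a linear section `s` of `E → E ⧸ Z(E)`, the map `(x, y) ↦ ⁅s x, s y⁆` is a 2-cocycle with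
values in the vector space underlying `E`, and its radical is trivial. -/
theorem exists_twoCocycle_of_isCapable (hL : IsCapable F L) :
    ∃ (V : Type u) (_ : AddCommGroup V) (_ : Module F V)
      (c : twoCocycle F L (TrivialLieModule F L V)), ∀ z, (∀ x, c.1 x z = 0) → z = 0 := by
  obtain ⟨E, _, _, f, hf, hker⟩ := isCapable_iff_exists_surjective.1 hL
  obtain ⟨s, hs⟩ := (f : E →ₗ[F] L).exists_rightInverse_of_surjective
    (LinearMap.range_eq_top.2 hf)
  have hfs (x : L) : f (s x) = x := LinearMap.congr_fun hs x
  have lie_s (e a : E) : ⁅e, s (f a)⁆ = ⁅e, a⁆ :=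
    lie_eq_lie_of_ker_le_center hker.le (hfs (f a)) e
  let ω : L →ₗ[F] L →ₗ[F] TrivialLieModule F L E :=
    ((LieModule.toEnd F E E : E →ₗ[F] Module.End F E).compl₁₂ s s).compr₂
      (TrivialLieModule.equiv F L E).symm
  have hω : (⟨ω, fun x ↦ lie_self (s x)⟩ : twoCochain F L (TrivialLieModule F L E)) ∈
      twoCocycle F L (TrivialLieModule F L E) := by
    refine (mem_twoCocycle_iff_of_trivial F L _ _).2 fun x y z ↦ ?_
    have s_lie (e : E) (a b : L) : ⁅e, s ⁅a, b⁆⁆ = ⁅e, ⁅s a, s b⁆⁆ := by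
      rw [← lie_s e ⁅s a, s b⁆, LieHom.map_lie, hfs, hfs]
    have jacobi : ⁅s x, s ⁅y, z⁆⁆ = ⁅s ⁅x, y⁆, s z⁆ + ⁅s y, s ⁅x, z⁆⁆ := by
      rw [← lie_skew _ (s z), s_lie, s_lie, s_lie, lie_skew, leibniz_lie]
    exact jacobi
  refine ⟨E, inferInstance, inferInstance, ⟨_, hω⟩, fun z hz ↦ ?_⟩
  have hcentral : s z ∈ f.ker := by
    rw [hker, LieModule.mem_maxTrivSubmodule]
    intro e
    rw [← lie_skew, ← lie_s, lie_skew]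
    exact hz (f e)
  rw [← hfs z]
  exact LieHom.mem_ker.1 hcentral

end Capable

section Coordinates

variable {R L : Type*} [CommRing R] [LieRing L] [LieAlgebra R L]

/-- The exterior product of two linear forms, as a 2-cochain with trivial coefficients. -/
def wedge (f g : Dual R L) : twoCochain R L (TrivialLieModule R L R) :=
  ⟨LinearMap.mk₂ R (fun x y ↦ (TrivialLieModule.equiv R L R).symm (f x * g y - g x * f y))
    (fun _ _ _ ↦ by rw [← map_add]; congr 1; simp only [map_add]; ring)
    (fun _ _ _ ↦ by rw [← map_smul]; congr 1; simp only [map_smul, smul_eq_mul]; ring)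
    (fun _ _ _ ↦ by rw [← map_add]; congr 1; simp only [map_add]; ring)
    (fun _ _ _ ↦ by rw [← map_smul]; congr 1; simp only [map_smul, smul_eq_mul]; ring),
  fun x ↦ by simp [mul_comm]⟩

theorem wedge_apply (f g : Dual R L) (x y : L) :
    wedge f g x y = (TrivialLieModule.equiv R L R).symm (f x * g y - g x * f y) := rfl

theorem lie_eq_sum_Ioi {ι : Type*} [Fintype ι] [LinearOrder ι] [LocallyFiniteOrderTop ι]
    [LocallyFiniteOrderBot ι] (b : Basis ι R L) (x y : L) :
    ⁅x, y⁆ = ∑ i, ∑ j ∈ Finset.Ioi i,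
      (b.coord i x * b.coord j y - b.coord j x * b.coord i y) • ⁅b i, b j⁆ := by
  let f (i j : ι) : L := (b.coord i x * b.coord j y) • ⁅b i, b j⁆
  have pair_eq (i j : ι) :
      (b.coord i x * b.coord j y - b.coord j x * b.coord i y) • ⁅b i, b j⁆ = f j i + f i j := by
    simp only [f]
    rw [← lie_skew (b j) (b i)]
    module
  have off_diag_eq (i : ι) : ∑ j ∈ {i}ᶜ, f j i = ∑ j, f j i := by
    rw [← Finset.sum_add_sum_compl {i}, Finset.sum_singleton]
    simp [f]
  calc ⁅x, y⁆ = ∑ i, ∑ j, f i j := by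
        conv_lhs => rw [← b.sum_repr x, ← b.sum_repr y]
        simp only [f, sum_lie, lie_sum, smul_lie, lie_smul, smul_smul, Finset.smul_sum,
          Basis.coord_apply]
        rw [Finset.sum_comm]
        simp only [mul_comm]
    _ = ∑ i, ∑ j, f j i := Finset.sum_comm
    _ = _ := by
        simp only [pair_eq, Finset.sum_sum_Ioi_add_eq_sum_sum_off_diag, off_diag_eq]

theorem lie_eq_of_L43 {b : Basis (Fin 4) R L} (h01 : ⁅b 0, b 1⁆ = b 2) (h02 : ⁅b 0, b 2⁆ = b 3)
    (hzero : ∀ i j : Fin 4, i < j → (i, j) ≠ (0, 1) → (i, j) ≠ (0, 2) → ⁅b i, b j⁆ = 0) (x y : L) :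
    ⁅x, y⁆ = (b.coord 0 x * b.coord 1 y - b.coord 1 x * b.coord 0 y) • b 2 +
      (b.coord 0 x * b.coord 2 y - b.coord 2 x * b.coord 0 y) • b 3 := by
  rw [lie_eq_sum_Ioi b]
  simp [Fin.sum_univ_succ, Fin.sum_Ioi_succ, h01, h02, hzero]

theorem lie_eq_of_L55 {b : Basis (Fin 5) R L} (h01 : ⁅b 0, b 1⁆ = b 2) (h02 : ⁅b 0, b 2⁆ = b 4)
    (h13 : ⁅b 1, b 3⁆ = b 4)
    (hzero : ∀ i j : Fin 5, i < j → (i, j) ≠ (0, 1) → (i, j) ≠ (0, 2) → (i, j) ≠ (1, 3) →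
      ⁅b i, b j⁆ = 0) (x y : L) :
    ⁅x, y⁆ = (b.coord 0 x * b.coord 1 y - b.coord 1 x * b.coord 0 y) • b 2 +
      (b.coord 0 x * b.coord 2 y - b.coord 2 x * b.coord 0 y) • b 4 +
      (b.coord 1 x * b.coord 3 y - b.coord 3 x * b.coord 1 y) • b 4 := by
  rw [lie_eq_sum_Ioi b]
  simp [Fin.sum_univ_succ, Fin.sum_Ioi_succ, h01, h02, h13, hzero]

end Coordinates

section Models

variable {F L : Type u} [Field F] [LieRing L] [LieAlgebra F L]

theorem isCapable_of_isL43 (hL : IsL43 F L) : IsCapable F L := by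
  obtain ⟨b, h01, h02, hzero⟩ := hL
  have lie_eq := lie_eq_of_L43 h01 h02 hzero
  have isCocycle : wedge (b.coord 0) (b.coord 3) ∈ twoCocycle F L (TrivialLieModule F L F) := by
    refine (mem_twoCocycle_iff_of_trivial F L _ _).2 fun x y z ↦ ?_
    have coord_zero (x y : L) : b.coord 0 ⁅x, y⁆ = 0 := by simp [lie_eq]
    have coord_three (x y : L) : b.coord 3 ⁅x, y⁆ =
        b.coord 0 x * b.coord 2 y - b.coord 2 x * b.coord 0 y := by simp [lie_eq]
    simp only [wedge_apply, ← map_add, coord_zero, coord_three]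
    congr 1
    ring
  refine isCapable_of_twoCocycle ⟨_, isCocycle⟩ fun z hz hωz ↦ ?_
  have lie_z (x : L) : ⁅x, z⁆ = 0 := (LieModule.mem_maxTrivSubmodule F L L z).1 hz x
  have h1 : b.coord 1 z = 0 := by simpa [lie_eq] using congrArg (b.coord 2) (lie_z (b 0))
  have h2 : b.coord 2 z = 0 := by simpa [lie_eq] using congrArg (b.coord 3) (lie_z (b 0))
  have h0 : b.coord 0 z = 0 := by simpa [lie_eq] using congrArg (b.coord 2) (lie_z (b 1))
  have h3 : b.coord 3 z = 0 := by simpa [wedge_apply] using hωz (b 0)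
  refine b.forall_coord_eq_zero_iff.1 fun i ↦ ?_
  fin_cases i <;> assumption

theorem isCapable_of_isL55 (hL : IsL55 F L) : IsCapable F L := by
  obtain ⟨b, h01, h02, h13, hzero⟩ := hL
  have lie_eq := lie_eq_of_L55 h01 h02 h13 hzero
  have isCocycle : wedge (b.coord 0) (b.coord 4) + wedge (b.coord 2) (b.coord 3) ∈
      twoCocycle F L (TrivialLieModule F L F) := by
    refine (mem_twoCocycle_iff_of_trivial F L _ _).2 fun x y z ↦ ?_
    have coord_zero (x y : L) : b.coord 0 ⁅x, y⁆ = 0 := by simp [lie_eq]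
    have coord_two (x y : L) : b.coord 2 ⁅x, y⁆ =
        b.coord 0 x * b.coord 1 y - b.coord 1 x * b.coord 0 y := by simp [lie_eq]
    have coord_three (x y : L) : b.coord 3 ⁅x, y⁆ = 0 := by simp [lie_eq]
    have coord_four (x y : L) : b.coord 4 ⁅x, y⁆ =
        b.coord 0 x * b.coord 2 y - b.coord 2 x * b.coord 0 y +
          (b.coord 1 x * b.coord 3 y - b.coord 3 x * b.coord 1 y) := by simp [lie_eq]
    simp only [add_apply_apply, wedge_apply, ← map_add, coord_zero, coord_two, coord_three,
      coord_four]
    congr 1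
    ring
  refine isCapable_of_twoCocycle ⟨_, isCocycle⟩ fun z hz hωz ↦ ?_
  have lie_z (x : L) : ⁅x, z⁆ = 0 := (LieModule.mem_maxTrivSubmodule F L L z).1 hz x
  have h1 : b.coord 1 z = 0 := by simpa [lie_eq] using congrArg (b.coord 2) (lie_z (b 0))
  have h2 : b.coord 2 z = 0 := by simpa [lie_eq] using congrArg (b.coord 4) (lie_z (b 0))
  have h0 : b.coord 0 z = 0 := by simpa [lie_eq] using congrArg (b.coord 2) (lie_z (b 1))
  have h3 : b.coord 3 z = 0 := by simpa [lie_eq] using congrArg (b.coord 4) (lie_z (b 1))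
  have h4 : b.coord 4 z = 0 := by simpa [wedge_apply] using hωz (b 0)
  refine b.forall_coord_eq_zero_iff.1 fun i ↦ ?_
  fin_cases i <;> assumption

end Models

section LowerCentralSeries

variable {R L M : Type*} [CommRing R] [LieRing L] [LieAlgebra R L] [AddCommGroup M] [Module R M]
  [LieRingModule L M]

theorem lie_mem_lowerCentralSeries_succ {k : ℕ} {m : M}
    (hm : m ∈ LieModule.lowerCentralSeries R L M k) (x : L) :
    ⁅x, m⁆ ∈ LieModule.lowerCentralSeries R L M (k + 1) := by
  rw [LieModule.lowerCentralSeries_succ]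
  exact LieSubmodule.lie_mem_lie (LieSubmodule.mem_top x) hm

theorem lie_mem_lowerCentralSeries_one (x : L) (m : M) :
    ⁅x, m⁆ ∈ LieModule.lowerCentralSeries R L M 1 :=
  lie_mem_lowerCentralSeries_succ (LieSubmodule.mem_top m) x

theorem lie_eq_zero_of_lowerCentralSeries_succ_eq_bot {k : ℕ}
    (hk : LieModule.lowerCentralSeries R L M (k + 1) = ⊥) {m : M}
    (hm : m ∈ LieModule.lowerCentralSeries R L M k) (x : L) : ⁅x, m⁆ = 0 := by
  rw [← LieSubmodule.mem_bot (R := R) (L := L), ← hk]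
  exact lie_mem_lowerCentralSeries_succ hm x

variable [LieModule R L M]

theorem exists_lie_lie_ne_zero (h : LieModule.lowerCentralSeries R L M 2 ≠ ⊥) :
    ∃ (x y : L) (m : M), ⁅x, ⁅y, m⁆⁆ ≠ 0 := by
  contrapose! h
  rw [LieModule.lowerCentralSeries_succ, ← LieModule.le_max_triv_iff_bracket_eq_bot,
    LieModule.lowerCentralSeries_succ, LieSubmodule.lie_le_iff]
  exact fun y _ m _ ↦ (LieModule.mem_maxTrivSubmodule R L M _).2 fun x ↦ h x y m

end LowerCentralSeries

section PairLie

variable {F L M : Type*} [Field F] [LieRing L] [LieAlgebra F L] [AddCommGroup M] [Module F M]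
  [LieRingModule L M] [LieModule F L M] {x : L} {m : M}

theorem linearIndependent_pair_lie (h1 : ⁅x, m⁆ ≠ 0) (h2 : ⁅x, ⁅x, m⁆⁆ = 0) :
    LinearIndependent F ![m, ⁅x, m⁆] := by
  refine LinearIndependent.pair_iff.2 fun p q hpq ↦ ?_
  have hp : p = 0 := by simpa [h2, h1] using congrArg (⁅x, ·⁆) hpq
  exact ⟨hp, by simpa [hp, h1] using hpq⟩

theorem toSubmodule_eq_span_pair_lie {N : LieSubmodule F L M} (hN : finrank F N = 2) (hm : m ∈ N)
    (h1 : ⁅x, m⁆ ≠ 0) (h2 : ⁅x, ⁅x, m⁆⁆ = 0) :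
    (N : Submodule F M) = Submodule.span F {m, ⁅x, m⁆} := by
  have : FiniteDimensional F N := Module.finite_of_finrank_eq_succ hN
  have hle : Submodule.span F {m, ⁅x, m⁆} ≤ N :=
    Submodule.span_le.2 (Set.pair_subset hm (N.lie_mem hm))
  have hrank : finrank F (Submodule.span F {m, ⁅x, m⁆}) = 2 := by
    have := finrank_span_eq_card (linearIndependent_pair_lie (F := F) h1 h2)
    rwa [Matrix.range_cons_cons_empty, Fintype.card_fin] at this
  exact (Submodule.eq_of_le_of_finrank_eq hle (hrank.trans hN.symm)).symm

theorem exists_eq_smul_lie_of_mem_span_pair {u : M} (hu : u ∈ Submodule.span F {m, ⁅x, m⁆})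
    (h1 : ⁅x, m⁆ ≠ 0) (h2 : ⁅x, ⁅x, m⁆⁆ = 0) (hxu : ⁅x, u⁆ = 0) : ∃ γ : F, u = γ • ⁅x, m⁆ := by
  obtain ⟨β, γ, rfl⟩ := Submodule.mem_span_pair.1 hu
  have hβ : β = 0 := by simpa [h1, h2] using hxu
  exact ⟨γ, by rw [hβ, zero_smul, zero_add]⟩

end PairLie

section AdaptedPair

/-- Two elements `x`, `y` such that `⁅x, ⁅x, y⁆⁆` is central and nonzero, `⁅x, y⁆` and
`⁅x, ⁅x, y⁆⁆` span the derived subalgebra, and `⁅y, ⁅x, y⁆⁆ = 0`. They are the first two vectors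
of the bases of `L_{4,3}` and `L_{5,5}`; the derived subalgebra appears as the first term of the
lower central series, which Mathlib indexes from `0`. -/
structure IsAdaptedPair (F : Type*) {L : Type*} [Field F] [LieRing L] [LieAlgebra F L]
    (x y : L) : Prop where
  ne_zero : ⁅x, ⁅x, y⁆⁆ ≠ 0
  lie_eq_zero (t : L) : ⁅t, ⁅x, ⁅x, y⁆⁆⁆ = 0
  lie_right_eq_zero : ⁅y, ⁅x, y⁆⁆ = 0
  lowerCentralSeries_one_eq :
    (LieModule.lowerCentralSeries F L L 1 : Submodule F L) =
      Submodule.span F {⁅x, y⁆, ⁅x, ⁅x, y⁆⁆}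

section Existence

variable {F L : Type*} [Field F] [LieRing L] [LieAlgebra F L]

/-- If `L` satisfied the identity `⁅x, ⁅x, z⁆⁆ = 0`, then `⁅x, ⁅y, z⁆⁆` would be skew in `x`, `y`.
When it is nonzero, it spans `L²` together with `⁅y, z⁆`, so that `⁅y, ·⁆` vanishes on `L²`. -/
theorem exists_lie_lie_self_ne_zero (h2 : LieModule.lowerCentralSeries F L L 2 ≠ ⊥)
    (h3 : LieModule.lowerCentralSeries F L L 3 = ⊥)
    (hder : finrank F (LieModule.lowerCentralSeries F L L 1) = 2) :
    ∃ x y : L, ⁅x, ⁅x, y⁆⁆ ≠ 0 := by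
  by_contra! hEngel
  obtain ⟨x, y, z, hxyz⟩ := exists_lie_lie_ne_zero h2
  have hskew : ⁅y, ⁅x, z⁆⁆ + ⁅x, ⁅y, z⁆⁆ = 0 := by
    simpa [hEngel] using hEngel (x + y) z
  have hcentral (t : L) : ⁅t, ⁅x, ⁅y, z⁆⁆⁆ = 0 :=
    lie_eq_zero_of_lowerCentralSeries_succ_eq_bot h3
      (lie_mem_lowerCentralSeries_succ (lie_mem_lowerCentralSeries_one y z) x) t
  have hspan := toSubmodule_eq_span_pair_lie hder (lie_mem_lowerCentralSeries_one y z) hxyz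
    (hcentral x)
  have hxz : ⁅x, z⁆ ∈ Submodule.span F {⁅y, z⁆, ⁅x, ⁅y, z⁆⁆} :=
    hspan ▸ lie_mem_lowerCentralSeries_one x z
  obtain ⟨p, q, hpq⟩ := Submodule.mem_span_pair.1 hxz
  have hyxz : ⁅y, ⁅x, z⁆⁆ = 0 := by simp [← hpq, hEngel, hcentral]
  exact hxyz (by rwa [hyxz, zero_add] at hskew)

theorem exists_isAdaptedPair (h2 : LieModule.lowerCentralSeries F L L 2 ≠ ⊥)
    (h3 : LieModule.lowerCentralSeries F L L 3 = ⊥)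
    (hder : finrank F (LieModule.lowerCentralSeries F L L 1) = 2) :
    ∃ x y : L, IsAdaptedPair F x y := by
  obtain ⟨x, y, hne⟩ := exists_lie_lie_self_ne_zero h2 h3 hder
  have hcentral (t a : L) : ⁅t, ⁅a, ⁅x, y⁆⁆⁆ = 0 :=
    lie_eq_zero_of_lowerCentralSeries_succ_eq_bot h3
      (lie_mem_lowerCentralSeries_succ (lie_mem_lowerCentralSeries_one x y) a) t
  have hspan := toSubmodule_eq_span_pair_lie hder (lie_mem_lowerCentralSeries_one x y) hne
    (hcentral x x)
  obtain ⟨γ, hγ⟩ : ∃ γ : F, ⁅y, ⁅x, y⁆⁆ = γ • ⁅x, ⁅x, y⁆⁆ :=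
    exists_eq_smul_lie_of_mem_span_pair (hspan ▸ lie_mem_lowerCentralSeries_one y ⁅x, y⁆) hne
      (hcentral x x) (hcentral x y)
  have hlie : ⁅x, y - γ • x⁆ = ⁅x, y⁆ := by rw [lie_sub, lie_smul, lie_self, smul_zero, sub_zero]
  refine ⟨x, y - γ • x, ?_, ?_, ?_, ?_⟩ <;> rw [hlie]
  · exact hne
  · exact fun t ↦ hcentral t x
  · rw [sub_lie, smul_lie, hγ, sub_self]
  · exact hspan

end Existence

namespace IsAdaptedPair

section Field

variable {F L : Type*} [Field F] [LieRing L] [LieAlgebra F L] {x y : L}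

theorem lie_left_eq_zero (h : IsAdaptedPair F x y) (t : L) : ⁅⁅x, ⁅x, y⁆⁆, t⁆ = 0 := by
  rw [← lie_skew, h.lie_eq_zero, neg_zero]

theorem exists_lie_eq (h : IsAdaptedPair F x y) (s t : L) :
    ∃ β δ : F, ⁅s, t⁆ = β • ⁅x, y⁆ + δ • ⁅x, ⁅x, y⁆⁆ := by
  have hst : ⁅s, t⁆ ∈ Submodule.span F {⁅x, y⁆, ⁅x, ⁅x, y⁆⁆} :=
    h.lowerCentralSeries_one_eq ▸ lie_mem_lowerCentralSeries_one s t
  obtain ⟨β, δ, hβδ⟩ := Submodule.mem_span_pair.1 hst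
  exact ⟨β, δ, hβδ.symm⟩

theorem exists_eq_smul (h : IsAdaptedPair F x y) {u : L}
    (hu : u ∈ LieModule.lowerCentralSeries F L L 1) (hxu : ⁅x, u⁆ = 0) :
    ∃ γ : F, u = γ • ⁅x, ⁅x, y⁆⁆ :=
  exists_eq_smul_lie_of_mem_span_pair
    (h.lowerCentralSeries_one_eq ▸ hu : u ∈ Submodule.span F {⁅x, y⁆, ⁅x, ⁅x, y⁆⁆}) h.ne_zero
    (h.lie_eq_zero x) hxu

theorem exists_lie_lie_eq_smul (h : IsAdaptedPair F x y) (t : L) :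
    ∃ α : F, ⁅t, ⁅x, y⁆⁆ = α • ⁅x, ⁅x, y⁆⁆ := by
  obtain ⟨β, δ, hxt⟩ := h.exists_lie_eq x t
  refine h.exists_eq_smul (lie_mem_lowerCentralSeries_one _ _) ?_
  rw [leibniz_lie, hxt]
  simp [h.lie_left_eq_zero, h.lie_eq_zero]

/-- The coefficients `β` and `α` are read off `⁅x, t⁆` and `⁅t, ⁅x, y⁆⁆`. -/
theorem exists_eq_add (h : IsAdaptedPair F x y) (t : L) : ∃ (α β δ : F) (w : L),
    t = α • x + β • y + δ • ⁅x, y⁆ + w ∧ ⁅x, w⁆ = 0 ∧ ⁅⁅x, y⁆, w⁆ = 0 := by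
  obtain ⟨α, hα⟩ := h.exists_lie_lie_eq_smul t
  obtain ⟨β, δ, hβδ⟩ := h.exists_lie_eq x t
  refine ⟨α, β, δ, t - (α • x + β • y + δ • ⁅x, y⁆), by abel, ?_, ?_⟩
  · simp [hβδ]
  · rw [← lie_skew]
    simp [hα, h.lie_right_eq_zero]

theorem exists_lie_right_eq_smul (h : IsAdaptedPair F x y) {w : L} (hxw : ⁅x, w⁆ = 0)
    (hxyw : ⁅⁅x, y⁆, w⁆ = 0) : ∃ γ : F, ⁅y, w⁆ = γ • ⁅x, ⁅x, y⁆⁆ :=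
  h.exists_eq_smul (lie_mem_lowerCentralSeries_one y w) <| by
    rw [leibniz_lie, hxyw, hxw, lie_zero, add_zero]

theorem lie_lie_eq_zero_of_lie_right_eq (h : IsAdaptedPair F x y) {z : L} (hxz : ⁅x, z⁆ = 0)
    (hyz : ⁅y, z⁆ = ⁅x, ⁅x, y⁆⁆) : ⁅⁅x, y⁆, z⁆ = 0 := by
  rw [lie_lie, hxz, hyz, h.lie_eq_zero, lie_zero, sub_zero]

theorem eq_zero_of_smul_add_smul_add_smul (h : IsAdaptedPair F x y) {α β δ : F} {w : L}
    (hxw : ⁅x, w⁆ = 0) (hxyw : ⁅⁅x, y⁆, w⁆ = 0) (hsum : α • x + β • y + δ • ⁅x, y⁆ + w = 0) :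
    α = 0 ∧ β = 0 ∧ δ = 0 ∧ w = 0 := by
  have hyx : ⁅⁅x, y⁆, y⁆ = 0 := by rw [← lie_skew, h.lie_right_eq_zero, neg_zero]
  have hα : α = 0 := by
    have hxyx : ⁅x, ⁅y, x⁆⁆ ≠ 0 := by
      rw [← lie_skew y x, lie_neg]
      exact neg_ne_zero.2 h.ne_zero
    simpa [hxyx, hyx, hxyw] using congrArg (⁅⁅x, y⁆, ·⁆) hsum
  have hβδ : β • ⁅x, y⁆ + δ • ⁅x, ⁅x, y⁆⁆ = 0 := by
    simpa [hxw] using congrArg (⁅x, ·⁆) hsum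
  obtain ⟨hβ, hδ⟩ :=
    LinearIndependent.pair_iff.1 (linearIndependent_pair_lie h.ne_zero (h.lie_eq_zero x)) β δ hβδ
  exact ⟨hα, hβ, hδ, by simpa [hα, hβ, hδ] using hsum⟩

section Cocycle

variable {M : Type*} [AddCommGroup M] [Module F M] [LieRingModule L M] [LieModule F L M]
  [LieModule.IsTrivial L M]

theorem twoCocycle_apply_eq_zero (h : IsAdaptedPair F x y) (c : twoCocycle F L M) {t : L}
    (ht : ⁅t, ⁅x, y⁆⁆ = 0) : c.1 t ⁅x, ⁅x, y⁆⁆ = 0 := by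
  obtain ⟨β, δ, htx⟩ := h.exists_lie_eq t x
  have hself : c.1 ⁅x, y⁆ ⁅x, y⁆ = 0 := c.1.2 _
  have hc : c.1 ⁅x, ⁅x, y⁆⁆ ⁅x, y⁆ = 0 :=
    twoCocycle_apply_lie_eq_zero c (h.lie_left_eq_zero x) (h.lie_left_eq_zero y)
  rw [twoCocycle_apply_lie, ht, htx]
  simp [hself, hc]

end Cocycle

end Field

section Capable

variable {F L : Type u} [Field F] [LieRing L] [LieAlgebra F L] {x y : L}

/-- Every 2-cocycle kills `⁅v, w⁆` against `x` by the cocycle identity, and against the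
centralizer of `⁅x, y⁆` because `⁅v, w⁆` is a multiple of `⁅x, ⁅x, y⁆⁆`. As `x` and that
centralizer span `L`, the bracket `⁅v, w⁆` lies in the radical of every 2-cocycle. -/
theorem lie_eq_zero_of_isCapable (h : IsAdaptedPair F x y) (hL : IsCapable F L) {v w : L}
    (hv : ⁅x, v⁆ = 0) (hw : ⁅x, w⁆ = 0) : ⁅v, w⁆ = 0 := by
  obtain ⟨V, _, _, c, hc⟩ := exists_twoCocycle_of_isCapable hL
  obtain ⟨γ, hγ⟩ := h.exists_eq_smul (lie_mem_lowerCentralSeries_one v w)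
    (by rw [leibniz_lie, hv, hw, zero_lie, lie_zero, add_zero])
  refine hc _ fun t ↦ ?_
  obtain ⟨α, hα⟩ := h.exists_lie_lie_eq_smul t
  have hs : c.1 (t - α • x) ⁅v, w⁆ = 0 := by
    rw [hγ, map_smul, h.twoCocycle_apply_eq_zero, smul_zero]
    rw [sub_lie, smul_lie, hα, sub_self]
  have hx : c.1 x ⁅v, w⁆ = 0 := twoCocycle_apply_lie_eq_zero c hv hw
  rw [← sub_add_cancel t (α • x), map_add, LinearMap.add_apply, hs, map_smul,
    LinearMap.smul_apply, hx, smul_zero, add_zero]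

theorem exists_eq_smul_of_commute (h : IsAdaptedPair F x y) (hL : IsCapable F L)
    (hstem : LieAlgebra.center F L ≤ LieModule.lowerCentralSeries F L L 1) {w : L}
    (hxw : ⁅x, w⁆ = 0) (hyw : ⁅y, w⁆ = 0) : ∃ q : F, w = q • ⁅x, ⁅x, y⁆⁆ := by
  refine h.exists_eq_smul (hstem ((LieModule.mem_maxTrivSubmodule F L L w).2 fun t ↦ ?_)) hxw
  obtain ⟨α, β, δ, v, rfl, hxv, -⟩ := h.exists_eq_add t
  simp [hxw, hyw, h.lie_eq_zero_of_isCapable hL hxv hxw]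

theorem isL43 (h : IsAdaptedPair F x y)
    (hspan : ∀ w, ⁅x, w⁆ = 0 → ⁅⁅x, y⁆, w⁆ = 0 → ∃ q : F, w = q • ⁅x, ⁅x, y⁆⁆) : IsL43 F L := by
  have hli : LinearIndependent F ![x, y, ⁅x, y⁆, ⁅x, ⁅x, y⁆⁆] := by
    refine Fintype.linearIndependent_iff.2 fun g hg ↦ ?_
    rw [Fin.sum_univ_four] at hg
    obtain ⟨h0, h1, h2, h3⟩ := h.eq_zero_of_smul_add_smul_add_smul
      (by simp [h.lie_eq_zero]) (by simp [h.lie_eq_zero]) hg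
    have h3 : g 3 = 0 := (smul_eq_zero.1 h3).resolve_right h.ne_zero
    intro i
    fin_cases i <;> assumption
  have htop : ⊤ ≤ Submodule.span F (Set.range ![x, y, ⁅x, y⁆, ⁅x, ⁅x, y⁆⁆]) := by
    intro t _
    obtain ⟨α, β, δ, w, rfl, hxw, hxyw⟩ := h.exists_eq_add t
    obtain ⟨q, rfl⟩ := hspan w hxw hxyw
    exact (Submodule.mem_span_range_iff_exists_fun F).2
      ⟨![α, β, δ, q], by simp [Fin.sum_univ_four]⟩
  refine ⟨Basis.mk hli htop, by simp, by simp, fun i j hij h01 h02 ↦ ?_⟩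
  rw [Basis.mk_apply, Basis.mk_apply]
  fin_cases i <;> fin_cases j <;>
    first
    | exact absurd hij (by decide)
    | exact absurd rfl h01
    | exact absurd rfl h02
    | exact h.lie_eq_zero _
    | exact h.lie_right_eq_zero

theorem isL55 (h : IsAdaptedPair F x y) {z : L} (hxz : ⁅x, z⁆ = 0) (hyz : ⁅y, z⁆ = ⁅x, ⁅x, y⁆⁆)
    (hspan : ∀ w, ⁅x, w⁆ = 0 → ⁅y, w⁆ = 0 → ∃ q : F, w = q • ⁅x, ⁅x, y⁆⁆) : IsL55 F L := by
  have hxyz := h.lie_lie_eq_zero_of_lie_right_eq hxz hyz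
  have hli : LinearIndependent F ![x, y, ⁅x, y⁆, z, ⁅x, ⁅x, y⁆⁆] := by
    refine Fintype.linearIndependent_iff.2 fun g hg ↦ ?_
    rw [Fin.sum_univ_five, add_assoc] at hg
    obtain ⟨h0, h1, h2, hz⟩ := h.eq_zero_of_smul_add_smul_add_smul
      (by simp [h.lie_eq_zero, hxz]) (by simp [h.lie_eq_zero, hxyz]) hg
    have h3 : g 3 = 0 := by simpa [hyz, h.lie_eq_zero, h.ne_zero] using congrArg (⁅y, ·⁆) hz
    have h4 : g 4 = 0 := by simpa [h3, h.ne_zero] using hz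
    intro i
    fin_cases i <;> assumption
  have htop : ⊤ ≤ Submodule.span F (Set.range ![x, y, ⁅x, y⁆, z, ⁅x, ⁅x, y⁆⁆]) := by
    intro t _
    obtain ⟨α, β, δ, w, rfl, hxw, hxyw⟩ := h.exists_eq_add t
    obtain ⟨ε, hε⟩ := h.exists_lie_right_eq_smul hxw hxyw
    obtain ⟨q, hq⟩ := hspan (w - ε • z) (by simp [hxw, hxz]) (by simp [hε, hyz])
    rw [sub_eq_iff_eq_add'.1 hq]
    exact (Submodule.mem_span_range_iff_exists_fun F).2
      ⟨![α, β, δ, ε, q], by simp [Fin.sum_univ_five, add_assoc]⟩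
  refine ⟨Basis.mk hli htop, by simp, by simp, by simp [hyz], fun i j hij h01 h02 h13 ↦ ?_⟩
  rw [Basis.mk_apply, Basis.mk_apply]
  fin_cases i <;> fin_cases j <;>
    first
    | exact absurd hij (by decide)
    | exact absurd rfl h01
    | exact absurd rfl h02
    | exact absurd rfl h13
    | exact h.lie_eq_zero _
    | exact h.lie_right_eq_zero
    | exact hxz
    | exact hxyz

theorem isL43_or_isL55 (h : IsAdaptedPair F x y) (hL : IsCapable F L)
    (hstem : LieAlgebra.center F L ≤ LieModule.lowerCentralSeries F L L 1) :
    IsL43 F L ∨ IsL55 F L := by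
  by_cases hcomm : ∀ w : L, ⁅x, w⁆ = 0 → ⁅⁅x, y⁆, w⁆ = 0 → ⁅y, w⁆ = 0
  · exact .inl <| h.isL43 fun w hxw hxyw ↦
      h.exists_eq_smul_of_commute hL hstem hxw (hcomm w hxw hxyw)
  · push Not at hcomm
    obtain ⟨w, hxw, hxyw, hyw⟩ := hcomm
    obtain ⟨γ, hγ⟩ := h.exists_lie_right_eq_smul hxw hxyw
    have hγ0 : γ ≠ 0 := by
      rintro rfl
      exact hyw (by rw [hγ, zero_smul])
    exact .inr <| h.isL55 (z := γ⁻¹ • w) (by rw [lie_smul, hxw, smul_zero])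
      (by rw [lie_smul, hγ, inv_smul_smul₀ hγ0])
      fun _ hxv hyv ↦ h.exists_eq_smul_of_commute hL hstem hxv hyv

end Capable

end IsAdaptedPair

end AdaptedPair

end LieCapability

theorem stem_class_three_capable_iff_iso_L43_or_L55_general
    (F T : Type u) [Field F] [LieRing T] [LieAlgebra F T]
    (hclass : LieModule.lowerCentralSeries F T T 2 ≠ ⊥ ∧ LieModule.lowerCentralSeries F T T 3 = ⊥)
    (hder : finrank F ↥(LieModule.lowerCentralSeries F T T 1) = 2)
    (hstem : LieAlgebra.center F T ≤ LieModule.lowerCentralSeries F T T 1) :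
    IsCapable F T ↔ IsL43 F T ∨ IsL55 F T := by
  obtain ⟨x, y, hxy⟩ := LieCapability.exists_isAdaptedPair hclass.1 hclass.2 hder
  exact ⟨fun hT ↦ hxy.isL43_or_isL55 hT hstem,
    fun hT ↦ hT.elim LieCapability.isCapable_of_isL43 LieCapability.isCapable_of_isL55⟩

/-- A finite-dimensional stem nilpotent Lie algebra of class 3 with 2-dimensional derived
subalgebra is capable iff it is isomorphic to `L_{4,3}` or `L_{5,5}`. -/
theorem stem_class_three_capable_iff_iso_L43_or_L55
    (F T : Type u) [Field F] [LieRing T] [LieAlgebra F T] [FiniteDimensional F T]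
    (hclass : LieModule.lowerCentralSeries F T T 2 ≠ ⊥ ∧ LieModule.lowerCentralSeries F T T 3 = ⊥)
    (hder : finrank F ↥(LieModule.lowerCentralSeries F T T 1) = 2)
    (hstem : LieAlgebra.center F T ≤ LieModule.lowerCentralSeries F T T 1) :
    IsCapable F T ↔ IsL43 F T ∨ IsL55 F T :=
  stem_class_three_capable_iff_iso_L43_or_L55_general F T hclass hder hstem
end

section
/- Let T be a finite-dimensional nilpotent Lie algebra over a field F of nilpotency class 3 with dim [T,T] = 2 and dim T ≥ 6 such that T is stem (i.e. Z(T) ⊆ [T,T]). Then T is not capable. -/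
open Module

universe u

/-!
If `T ≃ E ⧸ Z(E)`, then the bracket of `E`, read on lifts, is a 2-cocycle on `T` with trivial
coefficients in `E` whose radical is zero. So it suffices to find a nonzero `z` in `T` that lies
in the radical of every such cocycle.

The class and `dim [T, T] = 2` give `x` and `w` such that `y = [x, w]` and `z = [x, y] ≠ 0` span
`[T, T]`; then `[T, [T, T]]` is the line through `z`, and `T` is spanned by the centralizer `C(x)`
together with `w` and `y`. If `C(x)` were abelian, the kernel `C(x) ∩ C(w)` of the map
`t ↦ ([x, t], [w, t])` would be central, and so `dim T ⧸ Z(T)` would be at most `2 + 2`. Otherwise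
`z` is a multiple of `[a, b]` with `a, b ∈ C(x)`, and the cocycle identity annihilates successively
`c(x, z)`, `c(z, C(x))`, `c(z, w)` and `c(z, y)`.
-/

open LieModule LieModule.Cohomology

section TrivialCocycle

variable {R L M : Type*} [CommRing R] [LieRing L] [LieAlgebra R L] [AddCommGroup M] [Module R M]

/-- The 2-cocycle condition for coefficients in `M` with the trivial action of `L`. Spelling out
the identity, instead of using `LieModule.Cohomology.twoCocycle`, spares `M` an `L`-module
structure; this matters when `M` is a Lie algebra covering `L`. -/
def IsTrivialTwoCocycle (c : twoCochain R L M) : Prop :=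
  ∀ x y z : L, c x ⁅y, z⁆ = c ⁅x, y⁆ z + c y ⁅x, z⁆

namespace IsTrivialTwoCocycle

variable {c : twoCochain R L M} (hc : IsTrivialTwoCocycle c)
include hc

lemma apply_lie_eq_zero {x a b : L} (ha : ⁅x, a⁆ = 0) (hb : ⁅x, b⁆ = 0) : c x ⁅a, b⁆ = 0 := by
  simp [hc x a b, ha, hb]

lemma lie_apply (x y t : L) : c ⁅x, y⁆ t = c x ⁅y, t⁆ - c y ⁅x, t⁆ :=
  eq_sub_of_add_eq (hc x y t).symm

lemma eq_zero_of_centralizer_sup_span {x w y z : L} (hxw : ⁅x, w⁆ = y) (hxy : ⁅x, y⁆ = z)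
    (hz : z ∈ LieAlgebra.center R L) (hxz : c x z = 0)
    (hy : ∀ t : L, ⁅t, y⁆ ∈ Submodule.span R {z})
    (hspan : ∀ t, ∃ p q : R, ⁅x, t - p • w - q • y⁆ = 0) : c z = 0 := by
  have hcxy (t : L) : c x ⁅y, t⁆ = 0 := by
    obtain ⟨r, hr⟩ := Submodule.mem_span_singleton.1 (hy t)
    rw [← lie_skew, ← hr, map_neg, map_smul, hxz, smul_zero, neg_zero]
  have hcz (t : L) : c z t = -c y ⁅x, t⁆ := by rw [← hxy, hc.lie_apply, hcxy, zero_sub]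
  have hzw : c z w = 0 := by rw [hcz, hxw, twoCochain_alt, neg_zero]
  have hzy : c z y = 0 := by
    have hzt (t : L) : ⁅z, t⁆ = 0 := by rw [← lie_skew, hz t, neg_zero]
    rw [← hxw, hc.apply_lie_eq_zero (hzt x) (hzt w)]
  ext t
  obtain ⟨p, q, ht⟩ := hspan t
  simpa [ht, hzw, hzy] using hcz (t - p • w - q • y)

end IsTrivialTwoCocycle

end TrivialCocycle

lemma exists_isTrivialTwoCocycle_of_ker_eq_center {R E L : Type*} [CommRing R] [LieRing E]
    [LieAlgebra R E] [LieRing L] [LieAlgebra R L] [Module.Projective R L] (π : E →ₗ⁅R⁆ L)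
    (hπ : Function.Surjective π) (hker : π.ker = LieAlgebra.center R E) :
    ∃ c : twoCochain R L E, IsTrivialTwoCocycle c ∧ ∀ x, c x = 0 → x = 0 := by
  obtain ⟨σ, hσ⟩ := (π : E →ₗ[R] L).exists_rightInverse_of_surjective (LinearMap.range_eq_top.2 hπ)
  replace hσ (x : L) : π (σ x) = x := LinearMap.congr_fun hσ x
  have lie_congr (u : E) {v v' : E} (h : π v = π v') : ⁅u, v⁆ = ⁅u, v'⁆ := by
    have hmem : v - v' ∈ π.ker := by rw [LieHom.mem_ker, map_sub, h, sub_self]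
    rw [hker] at hmem
    rw [← sub_eq_zero, ← lie_sub, hmem u]
  have lie_σ_lie (u : E) (x y : L) : ⁅u, σ ⁅x, y⁆⁆ = ⁅u, ⁅σ x, σ y⁆⁆ :=
    lie_congr u (by rw [LieHom.map_lie, hσ, hσ, hσ])
  refine ⟨⟨(toEnd R E E : E →ₗ[R] Module.End R E).compl₁₂ σ σ, fun x ↦ lie_self (σ x)⟩,
    fun x y z ↦ ?_, fun x hx ↦ ?_⟩
  · change ⁅σ x, σ ⁅y, z⁆⁆ = ⁅σ ⁅x, y⁆, σ z⁆ + ⁅σ y, σ ⁅x, z⁆⁆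
    rw [lie_σ_lie, lie_σ_lie, ← lie_skew (σ ⁅x, y⁆), lie_σ_lie, lie_skew, leibniz_lie]
  · have hσx : σ x ∈ LieAlgebra.center R E := fun u ↦ by
      rw [← lie_skew, lie_congr (σ x) (hσ (π u)).symm, neg_eq_zero]
      exact LinearMap.congr_fun hx (π u)
    rw [← hker, LieHom.mem_ker, hσ] at hσx
    exact hσx

namespace IsCapable

variable {F L : Type u} [Field F] [LieRing L] [LieAlgebra F L]

lemma exists_surjective_ker_eq_center (h : IsCapable F L) :
    ∃ (E : Type u) (_ : LieRing E) (_ : LieAlgebra F E) (π : E →ₗ⁅F⁆ L),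
      Function.Surjective π ∧ π.ker = LieAlgebra.center F E := by
  obtain ⟨E, e⟩ := h
  let mk : E →ₗ⁅F⁆ E ⧸ LieAlgebra.center F E :=
    { toLinearMap := LieSubmodule.Quotient.mk' (LieAlgebra.center F E)
      map_lie' := LieSubmodule.Quotient.mk_bracket (LieAlgebra.center F E) _ _ }
  refine ⟨E, _, _, e.symm.toLieHom.comp mk,
    e.symm.surjective.comp (LieSubmodule.Quotient.surjective_mk' (LieAlgebra.center F E)), ?_⟩
  ext u
  have hmk : mk u = 0 ↔ u ∈ LieAlgebra.center F E := LieSubmodule.Quotient.mk_eq_zero _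
  rw [LieHom.mem_ker, LieHom.comp_apply, ← hmk]
  exact e.symm.toLinearEquiv.map_eq_zero_iff

lemma exists_isTrivialTwoCocycle (h : IsCapable F L) :
    ∃ (M : Type u) (_ : AddCommGroup M) (_ : Module F M) (c : twoCochain F L M),
      IsTrivialTwoCocycle c ∧ ∀ x, c x = 0 → x = 0 := by
  obtain ⟨E, _, _, π, hπ, hker⟩ := h.exists_surjective_ker_eq_center
  exact ⟨E, _, _, exists_isTrivialTwoCocycle_of_ker_eq_center π hπ hker⟩

end IsCapable

section LowerCentralSeries

variable {R L M : Type*} [CommRing R] [LieRing L] [LieAlgebra R L]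
  [AddCommGroup M] [Module R M] [LieRingModule L M]

lemma lie_mem_lowerCentralSeries_succ {k : ℕ} (x : L) {m : M}
    (hm : m ∈ lowerCentralSeries R L M k) : ⁅x, m⁆ ∈ lowerCentralSeries R L M (k + 1) := by
  rw [lowerCentralSeries_succ]
  exact LieSubmodule.lie_mem_lie (LieSubmodule.mem_top x) hm

lemma lie_mem_lowerCentralSeries_one (x : L) (m : M) : ⁅x, m⁆ ∈ lowerCentralSeries R L M 1 :=
  lie_mem_lowerCentralSeries_succ x (LieSubmodule.mem_top m)

variable [LieModule R L M]

lemma lowerCentralSeries_succ_eq_bot_iff {k : ℕ} :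
    lowerCentralSeries R L M (k + 1) = ⊥ ↔
      lowerCentralSeries R L M k ≤ maxTrivSubmodule R L M := by
  rw [lowerCentralSeries_succ, le_max_triv_iff_bracket_eq_bot]

lemma exists_lie_lie_ne_zero_of_lowerCentralSeries_two_ne_bot
    (h : lowerCentralSeries R L M 2 ≠ ⊥) : ∃ (x y : L) (m : M), ⁅x, ⁅y, m⁆⁆ ≠ 0 := by
  contrapose! h
  rw [lowerCentralSeries_succ_eq_bot_iff, lowerCentralSeries_succ, LieSubmodule.lie_le_iff]
  exact fun y _ m _ x ↦ h x y m

end LowerCentralSeries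

section TwoDimensionalDerived

lemma ker_eq_span_singleton_of_finrank_eq_two {F V : Type*} [Field F] [AddCommGroup V] [Module F V]
    (hV : finrank F V = 2) {f : End F V} (hf : f * f = 0) {v : V} (hv : f v ≠ 0) :
    LinearMap.ker f = Submodule.span F {f v} := by
  have : FiniteDimensional F V := FiniteDimensional.of_finrank_pos (by omega)
  have hle : Submodule.span F {f v} ≤ LinearMap.ker f := by
    rw [Submodule.span_singleton_le_iff_mem]
    exact LinearMap.congr_fun hf v
  have hrange : 0 < finrank F (LinearMap.range f) :=
    have : Nontrivial (LinearMap.range f) := ⟨⟨f v, v, rfl⟩, 0, by simpa [Subtype.ext_iff] using hv⟩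
    finrank_pos
  have := f.finrank_range_add_finrank_ker
  exact (Submodule.eq_of_le_of_finrank_le hle (by rw [finrank_span_singleton hv]; omega)).symm

variable {F T : Type*} [Field F] [LieRing T] [LieAlgebra F T]

lemma rank_quotient_center_le_add_rank_lowerCentralSeries_one {x w : T}
    (h : ∀ t, ⁅x, t⁆ = 0 → ⁅w, t⁆ = 0 → t ∈ LieAlgebra.center F T) :
    Module.rank F (T ⧸ LieAlgebra.center F T) ≤
      Module.rank F (lowerCentralSeries F T T 1) + Module.rank F (lowerCentralSeries F T T 1) := by
  let L : Submodule F T := (lowerCentralSeries F T T 1).toSubmodule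
  let f : T →ₗ[F] L × L :=
    ((toEnd F T T x).codRestrict L (lie_mem_lowerCentralSeries_one x)).prod
      ((toEnd F T T w).codRestrict L (lie_mem_lowerCentralSeries_one w))
  have hker : LinearMap.ker f ≤ (LieAlgebra.center F T).toSubmodule := fun t ht ↦
    h t (congrArg (fun l ↦ (l.1 : T)) ht) (congrArg (fun l ↦ (l.2 : T)) ht)
  calc Module.rank F (T ⧸ LieAlgebra.center F T)
      ≤ Module.rank F (T ⧸ LinearMap.ker f) :=
        LinearMap.rank_le_of_surjective _ (Submodule.factor_surjective hker)
    _ = Module.rank F (LinearMap.range f) := f.quotKerEquivRange.rank_eq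
    _ ≤ Module.rank F (L × L) := Submodule.rank_le _
    _ = Module.rank F L + Module.rank F L := rank_prod'

lemma finrank_center_lt_finrank_lowerCentralSeries_one
    [FiniteDimensional F (lowerCentralSeries F T T 1)] (hclass : lowerCentralSeries F T T 2 ≠ ⊥)
    (hstem : LieAlgebra.center F T ≤ lowerCentralSeries F T T 1) :
    finrank F (LieAlgebra.center F T) < finrank F (lowerCentralSeries F T T 1) := by
  have hlt : LieAlgebra.center F T < lowerCentralSeries F T T 1 :=
    hstem.lt_of_not_ge (lowerCentralSeries_succ_eq_bot_iff.not.1 hclass)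
  exact Submodule.finrank_lt_finrank_of_lt hlt

variable (hder : finrank F (lowerCentralSeries F T T 1) = 2)
include hder

lemma le_rank_quotient_center_of_lt_finrank {n : ℕ} (hdim : n < finrank F T)
    (hclass : lowerCentralSeries F T T 2 ≠ ⊥)
    (hstem : LieAlgebra.center F T ≤ lowerCentralSeries F T T 1) :
    n ≤ Module.rank F (T ⧸ LieAlgebra.center F T) := by
  have : FiniteDimensional F T := FiniteDimensional.of_finrank_pos (by omega)
  have hcenter := finrank_center_lt_finrank_lowerCentralSeries_one hclass hstem
  have hadd : finrank F (T ⧸ LieAlgebra.center F T) + finrank F (LieAlgebra.center F T) =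
      finrank F T := (LieAlgebra.center F T).toSubmodule.finrank_quotient_add_finrank
  have hquot : n ≤ finrank F (T ⧸ LieAlgebra.center F T) := by omega
  rw [← finrank_eq_rank]
  exact_mod_cast hquot

variable (hnil : lowerCentralSeries F T T 3 = ⊥)
include hnil

lemma mem_span_lie_of_lie_eq_zero {x y l : T} (hy : y ∈ lowerCentralSeries F T T 1)
    (hxy : ⁅x, y⁆ ≠ 0) (hl : l ∈ lowerCentralSeries F T T 1) (hxl : ⁅x, l⁆ = 0) :
    l ∈ Submodule.span F {⁅x, y⁆} := by
  let f : End F (lowerCentralSeries F T T 1) := toEnd F T _ x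
  have hsq : f * f = 0 := by
    ext m
    exact lowerCentralSeries_succ_eq_bot_iff.1 hnil (lie_mem_lowerCentralSeries_succ x m.2) x
  have hker := ker_eq_span_singleton_of_finrank_eq_two hder hsq (v := ⟨y, hy⟩)
    (fun h ↦ hxy (congrArg Subtype.val h))
  have hmem : (⟨l, hl⟩ : lowerCentralSeries F T T 1) ∈ LinearMap.ker f := Subtype.ext hxl
  obtain ⟨q, hq⟩ := Submodule.mem_span_singleton.1 (hker ▸ hmem)
  exact Submodule.mem_span_singleton.2 ⟨q, congrArg Subtype.val hq⟩

lemma lie_mem_span_lie {x y l : T} (hy : y ∈ lowerCentralSeries F T T 1) (hxy : ⁅x, y⁆ ≠ 0)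
    (t : T) (hl : l ∈ lowerCentralSeries F T T 1) : ⁅t, l⁆ ∈ Submodule.span F {⁅x, y⁆} :=
  mem_span_lie_of_lie_eq_zero hder hnil hy hxy (lie_mem_lowerCentralSeries_one t l)
    (lowerCentralSeries_succ_eq_bot_iff.1 hnil (lie_mem_lowerCentralSeries_succ t hl) x)

lemma exists_lie_sub_smul_sub_smul_eq_zero {x w : T} (hxw : ⁅x, ⁅x, w⁆⁆ ≠ 0) (t : T) :
    ∃ p q : F, ⁅x, t - p • w - q • ⁅x, w⁆⁆ = 0 := by
  have hder_mem (u : T) := lie_mem_lowerCentralSeries_one (R := F) x u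
  obtain ⟨p, hp⟩ := Submodule.mem_span_singleton.1
    (lie_mem_span_lie hder hnil (hder_mem w) hxw x (hder_mem t))
  have hxp : ⁅x, ⁅x, t - p • w⁆⁆ = 0 := by rw [lie_sub, lie_smul, lie_sub, lie_smul, hp, sub_self]
  obtain ⟨q, hq⟩ := Submodule.mem_span_singleton.1
    (mem_span_lie_of_lie_eq_zero hder hnil (hder_mem w) hxw (hder_mem _) hxp)
  exact ⟨p, q, by rw [lie_sub, lie_smul, hq, sub_self]⟩

lemma exists_lie_lie_self_ne_zero (hclass : lowerCentralSeries F T T 2 ≠ ⊥) :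
    ∃ x w : T, ⁅x, ⁅x, w⁆⁆ ≠ 0 := by
  obtain ⟨x, s, t, hxst⟩ := exists_lie_lie_ne_zero_of_lowerCentralSeries_two_ne_bot hclass
  by_contra! hengel
  have hder_mem (u v : T) := lie_mem_lowerCentralSeries_one (R := F) u v
  have hcentral (u v : T) : ⁅v, ⁅x, u⁆⁆ = 0 := by
    obtain ⟨q, hq⟩ := Submodule.mem_span_singleton.1 <|
      mem_span_lie_of_lie_eq_zero hder hnil (hder_mem s t) hxst (hder_mem x u) (hengel x u)
    have hv : ⁅v, ⁅x, ⁅s, t⁆⁆⁆ = 0 :=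
      lowerCentralSeries_succ_eq_bot_iff.1 hnil (lie_mem_lowerCentralSeries_succ x (hder_mem s t)) v
    rw [← hq, lie_smul, hv, smul_zero]
  exact hxst (by rw [leibniz_lie, ← lie_skew, hcentral, hcentral, neg_zero, add_zero])

lemma exists_lie_ne_zero_of_five_le_rank_quotient_center
    (hrank : 5 ≤ Module.rank F (T ⧸ LieAlgebra.center F T)) {x w : T} (hxw : ⁅x, ⁅x, w⁆⁆ ≠ 0) :
    ∃ a b : T, ⁅x, a⁆ = 0 ∧ ⁅x, b⁆ = 0 ∧ ⁅a, b⁆ ≠ 0 := by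
  by_contra! habelian
  have hcenter (a : T) (hxa : ⁅x, a⁆ = 0) (hwa : ⁅w, a⁆ = 0) : a ∈ LieAlgebra.center F T := by
    intro t
    obtain ⟨p, q, ht⟩ := exists_lie_sub_smul_sub_smul_eq_zero hder hnil hxw t
    have hya : ⁅⁅x, w⁆, a⁆ = 0 := by rw [lie_lie, hxa, hwa, lie_zero, lie_zero, sub_zero]
    simpa [sub_lie, hwa, hya] using habelian _ a ht hxa
  have hle := rank_quotient_center_le_add_rank_lowerCentralSeries_one hcenter
  rw [(rank_eq_ofNat_iff_finrank_eq_ofNat 2).2 hder] at hle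
  exact (hrank.trans hle).not_gt (by norm_num)

theorem exists_ne_zero_forall_isTrivialTwoCocycle_apply_eq_zero
    (hclass : lowerCentralSeries F T T 2 ≠ ⊥)
    (hrank : 5 ≤ Module.rank F (T ⧸ LieAlgebra.center F T)) :
    ∃ z : T, z ≠ 0 ∧ ∀ {M : Type*} [AddCommGroup M] [Module F M] (c : twoCochain F T M),
      IsTrivialTwoCocycle c → c z = 0 := by
  obtain ⟨x, w, hz⟩ := exists_lie_lie_self_ne_zero hder hnil hclass
  obtain ⟨a, b, hxa, hxb, hab⟩ :=
    exists_lie_ne_zero_of_five_le_rank_quotient_center hder hnil hrank hz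
  have hy := lie_mem_lowerCentralSeries_one (R := F) x w
  have hxab : ⁅x, ⁅a, b⁆⁆ = 0 := by rw [leibniz_lie, hxa, hxb, zero_lie, lie_zero, add_zero]
  obtain ⟨q, hq⟩ := Submodule.mem_span_singleton.1 <|
    mem_span_lie_of_lie_eq_zero hder hnil hy hz (lie_mem_lowerCentralSeries_one a b) hxab
  have hq0 : q ≠ 0 := fun h ↦ hab (by rw [← hq, h, zero_smul])
  refine ⟨⁅x, ⁅x, w⁆⁆, hz, fun c hc ↦ hc.eq_zero_of_centralizer_sup_span rfl rfl ?_ ?_ ?_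
    (exists_lie_sub_smul_sub_smul_eq_zero hder hnil hz)⟩
  · exact lowerCentralSeries_succ_eq_bot_iff.1 hnil (lie_mem_lowerCentralSeries_succ x hy)
  · have hcx : q • c x ⁅x, ⁅x, w⁆⁆ = 0 := by
      rw [← map_smul, hq, hc.apply_lie_eq_zero hxa hxb]
    exact (smul_eq_zero.1 hcx).resolve_left hq0
  · exact fun t ↦ lie_mem_span_lie hder hnil hy hz t hy

end TwoDimensionalDerived

theorem stem_class_three_dim_ge_six_not_capable_general
    (F T : Type u) [Field F] [LieRing T] [LieAlgebra F T]
    (hrank : 5 ≤ Module.rank F (T ⧸ LieAlgebra.center F T))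
    (hclass : lowerCentralSeries F T T 2 ≠ ⊥ ∧ lowerCentralSeries F T T 3 = ⊥)
    (hder : finrank F (lowerCentralSeries F T T 1) = 2) :
    ¬ IsCapable F T := by
  intro hcap
  obtain ⟨z, hz, hrad⟩ :=
    exists_ne_zero_forall_isTrivialTwoCocycle_apply_eq_zero hder hclass.2 hclass.1 hrank
  obtain ⟨M, _, _, c, hc, hfaithful⟩ := hcap.exists_isTrivialTwoCocycle
  exact hz (hfaithful z (hrad c hc))

/-- A finite-dimensional stem nilpotent Lie algebra of class 3 with 2-dimensional derived
subalgebra and dimension at least 6 is not capable. -/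
theorem stem_class_three_dim_ge_six_not_capable
    (F T : Type u) [Field F] [LieRing T] [LieAlgebra F T] [FiniteDimensional F T]
    (hdim : 6 ≤ finrank F T)
    (hclass : LieModule.lowerCentralSeries F T T 2 ≠ ⊥ ∧ LieModule.lowerCentralSeries F T T 3 = ⊥)
    (hder : finrank F ↥(LieModule.lowerCentralSeries F T T 1) = 2)
    (hstem : LieAlgebra.center F T ≤ LieModule.lowerCentralSeries F T T 1) :
    ¬ IsCapable F T :=
  stem_class_three_dim_ge_six_not_capable_general F T
    (mod_cast le_rank_quotient_center_of_lt_finrank hder hdim hclass.1 hstem) hclass hder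
end

section
/- The Lie algebra L_{4,3} over any field F, with basis x₁,…,x₄ and nonzero brackets [x₁,x₂] = x₃, [x₁,x₃] = x₄, is capable. -/
open Module

universe u

/-!
Let `I` be an abelian ideal of codimension one in `L`, let `χ` be a linear form with kernel `I`, and
choose `e` with `χ e = 1`. Then `⁅x, y⁆ = χ x • ⁅e, y⁆ - χ y • ⁅e, x⁆`, and consequently
`c x y = χ x • y - χ y • x` is a 2-cocycle with values in `L` regarded as a trivial module.
If `L` is not abelian, then `χ` vanishes on the centre of `L`, so `c e x = x` for central `x`: the
centre of the central extension of `L` defined by `c` is exactly the kernel of its projection to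
`L`.
The span of `x₂`, `x₃`, `x₄` is such an ideal of `L_{4,3}`.
-/

open LieAlgebra LieModule LieModule.Cohomology

section TwoCocycle

variable {R L M : Type*} [CommRing R] [LieRing L] [LieAlgebra R L] [AddCommGroup M] [Module R M]

/-- The 2-cochain `χ ∧ β`, where `χ` is a linear form and `β` is a 1-cochain. -/
def wedge (χ : Dual R L) (β : oneCochain R L M) : twoCochain R L M :=
  ⟨χ.smulRight β - (χ.smulRight β).flip, fun x ↦ by simp⟩

theorem wedge_apply_apply (χ : Dual R L) (β : oneCochain R L M) (x y : L) :
    wedge χ β x y = χ x • β y - χ y • β x :=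
  rfl

variable [LieRingModule L M] [LieModule R L M]

/-- The projection onto `L` of the extension of `L` by `M` defined by a 2-cocycle. Unlike
`LieAlgebra.Extension.ofTwoCocycle`, this does not require a Lie bracket on `M`. -/
def twoCocycleProj (c : twoCocycle R L M) : ofTwoCocycle c →ₗ⁅R⁆ L where
  toFun x := ((ofProd c).symm x).1
  map_add' _ _ := rfl
  map_smul' _ _ := rfl
  map_lie' := rfl

theorem twoCocycleProj_ofProd (c : twoCocycle R L M) (x : L × M) :
    twoCocycleProj c (ofProd c x) = x.1 :=
  rfl

theorem twoCocycleProj_surjective (c : twoCocycle R L M) :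
    Function.Surjective (twoCocycleProj c) :=
  fun x ↦ ⟨ofProd c (x, 0), rfl⟩

variable [IsTrivial L M]

theorem lie_ofProd (c : twoCocycle R L M) (x y : L × M) :
    ⁅ofProd c x, ofProd c y⁆ = ofProd c (⁅x.1, y.1⁆, c.1 x.1 y.1) := by
  simp [bracket_ofTwoCocycle, trivial_lie_zero]

theorem ofProd_mem_center_iff (c : twoCocycle R L M) (x : L × M) :
    ofProd c x ∈ center R (ofTwoCocycle c) ↔ x.1 ∈ center R L ∧ ∀ y, c.1 y x.1 = 0 := by
  simp only [mem_maxTrivSubmodule, (ofProd c).surjective.forall, lie_ofProd, ← of_zero,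
    (ofProd c).injective.eq_iff, Prod.mk_eq_zero, Prod.forall, forall_and, forall_const]

theorem ker_twoCocycleProj_eq_center (c : twoCocycle R L M)
    (hc : ∀ x ∈ center R L, (∀ y, c.1 y x = 0) → x = 0) :
    (twoCocycleProj c).ker = center R (ofTwoCocycle c) := by
  ext x
  obtain ⟨x, rfl⟩ := (ofProd c).surjective x
  rw [LieHom.mem_ker, twoCocycleProj_ofProd, ofProd_mem_center_iff]
  refine ⟨fun hx ↦ ?_, fun ⟨hx, hxc⟩ ↦ hc x.1 hx hxc⟩
  simp [hx]

end TwoCocycle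

section AbelianIdeal

variable {R L M : Type*} [CommRing R] [LieRing L] [LieAlgebra R L] [AddCommGroup M] [Module R M]
  {I : LieIdeal R L} {χ : Dual R L} {e : L}

theorem sub_dual_smul_mem (hχ : LinearMap.ker χ = I.toSubmodule) (he : χ e = 1) (x : L) :
    x - χ x • e ∈ I := by
  rw [← LieSubmodule.mem_toSubmodule, ← hχ]
  simp [he]

theorem lie_eq_smul_lie_sub_smul_lie [IsLieAbelian I] (hχ : LinearMap.ker χ = I.toSubmodule)
    (he : χ e = 1) (x y : L) : ⁅x, y⁆ = χ x • ⁅e, y⁆ - χ y • ⁅e, x⁆ := by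
  have h : ⁅x - χ x • e, y - χ y • e⁆ = 0 :=
    congrArg Subtype.val <| trivial_lie_zero I I
      ⟨_, sub_dual_smul_mem hχ he x⟩ ⟨_, sub_dual_smul_mem hχ he y⟩
  simp only [sub_lie, lie_sub, smul_lie, lie_smul, lie_self, ← lie_skew e x] at h ⊢
  rw [← sub_eq_zero, ← h]
  module

theorem dual_lie_eq_zero (hχ : LinearMap.ker χ = I.toSubmodule) (he : χ e = 1) (x y : L) :
    χ ⁅x, y⁆ = 0 := by
  have h : ⁅x, y⁆ = ⁅x - χ x • e, y⁆ + χ x • ⁅e, y - χ y • e⁆ := by simp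
  have hI : ⁅x, y⁆ ∈ I := by
    rw [h]
    exact I.add_mem (lie_mem_left R L I _ _ (sub_dual_smul_mem hχ he x))
      (I.smul_mem _ (lie_mem_right R L I _ _ (sub_dual_smul_mem hχ he y)))
  rwa [← LieSubmodule.mem_toSubmodule, ← hχ] at hI

theorem wedge_mem_twoCocycle [LieRingModule L M] [LieModule R L M] [IsTrivial L M]
    [IsLieAbelian I] (hχ : LinearMap.ker χ = I.toSubmodule) (he : χ e = 1)
    (β : oneCochain R L M) : wedge χ β ∈ twoCocycle R L M := by
  rw [mem_twoCocycle_iff_of_trivial]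
  intro x y z
  simp only [wedge_apply_apply, dual_lie_eq_zero hχ he]
  rw [lie_eq_smul_lie_sub_smul_lie hχ he x y, lie_eq_smul_lie_sub_smul_lie hχ he x z,
    lie_eq_smul_lie_sub_smul_lie hχ he y z]
  simp only [map_sub, map_smul]
  module

theorem dual_eq_zero_of_mem_center [IsDomain R] [IsTorsionFree R L] [IsLieAbelian I]
    (hχ : LinearMap.ker χ = I.toSubmodule) (he : χ e = 1) (hL : ¬IsLieAbelian L) {x : L}
    (hx : x ∈ center R L) : χ x = 0 := by
  by_contra hne
  have lie_e (y : L) : ⁅e, y⁆ = 0 := by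
    have h := lie_eq_smul_lie_sub_smul_lie hχ he x y
    rw [(mem_maxTrivSubmodule ..).1 hx e, ← lie_skew, (mem_maxTrivSubmodule ..).1 hx y] at h
    simpa [hne] using h.symm
  exact hL ⟨fun y z ↦ by simp [lie_eq_smul_lie_sub_smul_lie hχ he y z, lie_e]⟩

end AbelianIdeal

section Capability

variable {F L : Type u} [Field F] [LieRing L] [LieAlgebra F L]

theorem exists_dual_ker_eq_of_finrank_quotient_eq_one {V : Type*} [AddCommGroup V] [Module F V]
    {W : Submodule F V} (hW : finrank F (V ⧸ W) = 1) :
    ∃ (χ : Dual F V) (e : V), LinearMap.ker χ = W ∧ χ e = 1 := by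
  obtain ⟨φ⟩ := nonempty_linearEquiv_of_finrank_eq_one hW
  obtain ⟨e, he⟩ := (φ.symm.surjective.comp W.mkQ_surjective) 1
  exact ⟨φ.symm ∘ₗ W.mkQ, e, by simp [LinearEquiv.ker_comp], he⟩

theorem isCapable_of_surjective {E : Type u} [LieRing E] [LieAlgebra F E] (f : E →ₗ⁅F⁆ L)
    (hf : Function.Surjective f) (hker : f.ker = center F E) : IsCapable F L := by
  have e : (E ⧸ f.ker) ≃ₗ⁅F⁆ L :=
    f.quotKerEquivRange.trans <|
      (LieEquiv.ofEq _ _ (by rw [f.range_eq_top.2 hf])).trans LieSubalgebra.topEquiv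
  rw [hker] at e
  exact ⟨⟨E, e.symm⟩⟩

theorem isCapable_of_twoCocycle {M : Type u} [AddCommGroup M] [Module F M] [LieRingModule L M]
    [LieModule F L M] [IsTrivial L M] (c : twoCocycle F L M)
    (hc : ∀ x ∈ center F L, (∀ y, c.1 y x = 0) → x = 0) : IsCapable F L :=
  isCapable_of_surjective (twoCocycleProj c) (twoCocycleProj_surjective c)
    (ker_twoCocycleProj_eq_center c hc)

theorem L43_isCapable_general (I : LieIdeal F L) [IsLieAbelian I] (hI : finrank F (L ⧸ I) = 1)
    (hL : ¬IsLieAbelian L) : IsCapable F L := by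
  obtain ⟨χ, e, hχ, he⟩ := exists_dual_ker_eq_of_finrank_quotient_eq_one hI
  let β : oneCochain F L (TrivialLieModule F L L) := (TrivialLieModule.equiv F L L).symm
  refine isCapable_of_twoCocycle ⟨wedge χ β, wedge_mem_twoCocycle hχ he β⟩ fun x hx hxc ↦ ?_
  have hβ : β x = 0 := by
    simpa [wedge_apply_apply, he, dual_eq_zero_of_mem_center hχ he hL hx] using hxc e
  simpa [β] using hβ

end Capability

namespace IsL43

variable {F L : Type u} [Field F] [LieRing L] [LieAlgebra F L]

theorem not_isLieAbelian (h : IsL43 F L) : ¬IsLieAbelian L := by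
  obtain ⟨b, h01, -⟩ := h
  intro hL
  exact b.ne_zero 2 (h01.symm.trans (trivial_lie_zero L L _ _))

theorem exists_basis_lie_eq (h : IsL43 F L) :
    ∃ b : Basis (Fin 4) F L, ∀ x y : L, ⁅x, y⁆ =
      (b.repr x 0 * b.repr y 1 - b.repr x 1 * b.repr y 0) • b 2 +
        (b.repr x 0 * b.repr y 2 - b.repr x 2 * b.repr y 0) • b 3 := by
  obtain ⟨b, h01, h02, hz⟩ := h
  refine ⟨b, fun x y ↦ ?_⟩
  have h03 : ⁅b 0, b 3⁆ = 0 := hz 0 3 (by decide) (by decide) (by decide)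
  have h12 : ⁅b 1, b 2⁆ = 0 := hz 1 2 (by decide) (by decide) (by decide)
  have h13 : ⁅b 1, b 3⁆ = 0 := hz 1 3 (by decide) (by decide) (by decide)
  have h23 : ⁅b 2, b 3⁆ = 0 := hz 2 3 (by decide) (by decide) (by decide)
  conv_lhs => rw [← b.sum_repr x, ← b.sum_repr y]
  simp only [Fin.sum_univ_four, add_lie, lie_add, smul_lie, lie_smul, lie_self,
    ← lie_skew (b 1) (b 0), ← lie_skew (b 2) (b 0), ← lie_skew (b 3) (b 0),
    ← lie_skew (b 2) (b 1), ← lie_skew (b 3) (b 1), ← lie_skew (b 3) (b 2),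
    h01, h02, h03, h12, h13, h23]
  module

theorem exists_isLieAbelian_finrank_quotient_eq_one (h : IsL43 F L) :
    ∃ I : LieIdeal F L, IsLieAbelian I ∧ finrank F (L ⧸ I) = 1 := by
  obtain ⟨b, lie_eq⟩ := h.exists_basis_lie_eq
  let I : LieIdeal F L :=
    { LinearMap.ker (b.coord 0) with
      lie_mem := fun {x y} _ ↦ by
        change b.coord 0 ⁅x, y⁆ = 0
        simp [lie_eq] }
  refine ⟨I, ⟨fun x y ↦ Subtype.ext ?_⟩, ?_⟩
  · have repr_zero (z : I) : b.repr z 0 = 0 := z.2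
    simp [lie_eq, repr_zero]
  · have hs : Function.Surjective (b.coord 0) := fun r ↦ ⟨r • b 0, by simp⟩
    exact ((b.coord 0).quotKerEquivOfSurjective hs).finrank_eq.trans (finrank_self F)

end IsL43

/-- The Lie algebra `L_{4,3}` over any field is capable. -/
theorem L43_isCapable
    (F L : Type u) [Field F] [LieRing L] [LieAlgebra F L]
    (h : IsL43 F L) :
    IsCapable F L := by
  obtain ⟨I, _, hI⟩ := h.exists_isLieAbelian_finrank_quotient_eq_one
  exact L43_isCapable_general I hI h.not_isLieAbelian
end

section
/- Let L be a finite-dimensional Lie algebra over a field F which is the central product of two ideals A and B (i.e. L = A + B, [A,B] = 0, and A ∩ B ⊆ Z(L)) such that [A,A] ∩ [B,B] ≠ 0. Then L is not capable. -/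
open Module

universe u

/-!
Let `f : E → L` be a central extension and let `A'`, `B'` be the preimages of `A`, `B`. As
`⁅A, B⁆ = 0`, the ideal `⁅A', B'⁆` is central in `E`, so the Jacobi identity gives
`⁅⁅A', A'⁆, B'⁆ = 0`; up to central elements `⁅A', A'⁆` is the preimage of `⁅A, A⁆`, which hence
commutes with `B'`. By symmetry the preimage of `⁅A, A⁆ ⊓ ⁅B, B⁆` commutes with `A' + B' = E`, so
it lies in `Z(E)`. If `Z(E)` is all of `ker f`, then `⁅A, A⁆ ⊓ ⁅B, B⁆ = 0`.
-/

section LieIdeals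

variable {R L M : Type*} [CommRing R] [LieRing L] [LieAlgebra R L]
  [AddCommGroup M] [Module R M] [LieRingModule L M] [LieModule R L M]

theorem lie_eq_bot_of_le_maxTrivSubmodule (I : LieIdeal R L) {N : LieSubmodule R L M}
    (hN : N ≤ LieModule.maxTrivSubmodule R L M) : ⁅I, N⁆ = ⊥ :=
  (LieSubmodule.lie_eq_bot_iff N I).mpr fun x _ _ hn => hN hn x

theorem lie_lie_le_sup (I J : LieIdeal R L) (N : LieSubmodule R L M) :
    ⁅⁅I, J⁆, N⁆ ≤ ⁅I, ⁅J, N⁆⁆ ⊔ ⁅J, ⁅I, N⁆⁆ := by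
  rw [LieSubmodule.lie_le_iff]
  intro z hz n hn
  rw [← LieSubmodule.mem_toSubmodule, LieSubmodule.lieIdeal_oper_eq_linear_span'] at hz
  induction hz using Submodule.span_induction with
  | mem z hz =>
    obtain ⟨x, hx, y, hy, rfl⟩ := hz
    have hxy : ⁅x, ⁅y, n⁆⁆ ∈ ⁅I, ⁅J, N⁆⁆ :=
      LieSubmodule.lie_mem_lie hx (LieSubmodule.lie_mem_lie hy hn)
    have hyx : ⁅y, ⁅x, n⁆⁆ ∈ ⁅J, ⁅I, N⁆⁆ :=
      LieSubmodule.lie_mem_lie hy (LieSubmodule.lie_mem_lie hx hn)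
    rw [lie_lie]
    exact sub_mem (le_sup_left (b := ⁅J, ⁅I, N⁆⁆) hxy) (le_sup_right (a := ⁅I, ⁅J, N⁆⁆) hyx)
  | zero => rw [zero_lie]; exact zero_mem _
  | add x y _ _ hx hy => rw [add_lie]; exact add_mem hx hy
  | smul t x _ hx => rw [smul_lie]; exact SMulMemClass.smul_mem t hx

theorem lie_lie_eq_bot_of_le_maxTrivSubmodule {I J : LieIdeal R L} {N : LieSubmodule R L M}
    (hI : ⁅I, N⁆ ≤ LieModule.maxTrivSubmodule R L M)
    (hJ : ⁅J, N⁆ ≤ LieModule.maxTrivSubmodule R L M) : ⁅⁅I, J⁆, N⁆ = ⊥ := by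
  have hJI : ⁅J, ⁅I, N⁆⁆ = ⊥ := lie_eq_bot_of_le_maxTrivSubmodule J hI
  have hIJ : ⁅I, ⁅J, N⁆⁆ = ⊥ := lie_eq_bot_of_le_maxTrivSubmodule I hJ
  simpa only [hIJ, hJI, sup_idem, le_bot_iff] using lie_lie_le_sup I J N

end LieIdeals

section CentralExtension

variable {R E L : Type*} [CommRing R] [LieRing E] [LieAlgebra R E] [LieRing L] [LieAlgebra R L]
  {f : E →ₗ⁅R⁆ L}

theorem lieIdeal_comap_sup_of_surjective (hf : Function.Surjective f) (A B : LieIdeal R L) :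
    (A ⊔ B).comap f = A.comap f ⊔ B.comap f := by
  have map_comap (I : LieIdeal R L) : (I.comap f).map f = I := by
    rw [LieIdeal.map_comap_eq (f.isIdealMorphism_of_surjective hf),
      f.idealRange_eq_top_of_surjective hf, top_inf_eq]
  calc
    (A ⊔ B).comap f = ((A.comap f ⊔ B.comap f).map f).comap f := by
      rw [LieIdeal.map_sup, map_comap, map_comap]
    _ = A.comap f ⊔ B.comap f ⊔ f.ker :=
      LieIdeal.comap_map_eq (congrArg SetLike.coe (LieIdeal.coe_map_of_surjective hf))
    _ = A.comap f ⊔ B.comap f :=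
      sup_eq_left.mpr ((LieHom.ker_le_comap f A).trans le_sup_left)

theorem lieIdeal_comap_lie_of_surjective (hf : Function.Surjective f) (A B : LieIdeal R L) :
    ⁅A, B⁆.comap f = ⁅A.comap f, B.comap f⁆ ⊔ f.ker := by
  simpa only [f.idealRange_eq_top_of_surjective hf, top_inf_eq] using
    LieIdeal.comap_bracket_eq (J₁ := A) (J₂ := B) (f.isIdealMorphism_of_surjective hf)

variable {A B C : LieIdeal R L}

theorem lie_comap_comap_le_center (hker : f.ker ≤ LieAlgebra.center R E) (hAB : ⁅A, B⁆ = ⊥) :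
    ⁅A.comap f, B.comap f⁆ ≤ LieAlgebra.center R E :=
  calc
    ⁅A.comap f, B.comap f⁆ ≤ ⁅A, B⁆.comap f := LieIdeal.comap_bracket_le f
    _ = f.ker := by rw [hAB]; rfl
    _ ≤ LieAlgebra.center R E := hker

theorem lie_comap_comap_lie_eq_bot (hf : Function.Surjective f)
    (hker : f.ker ≤ LieAlgebra.center R E) (hAC : ⁅A, C⁆ = ⊥) (hBC : ⁅B, C⁆ = ⊥) :
    ⁅C.comap f, ⁅A, B⁆.comap f⁆ = ⊥ := by
  have lie_ker : ⁅C.comap f, f.ker⁆ = ⊥ := lie_eq_bot_of_le_maxTrivSubmodule _ hker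
  have lie_lie_comap : ⁅⁅A.comap f, B.comap f⁆, C.comap f⁆ = ⊥ :=
    lie_lie_eq_bot_of_le_maxTrivSubmodule (lie_comap_comap_le_center hker hAC)
      (lie_comap_comap_le_center hker hBC)
  rw [lieIdeal_comap_lie_of_surjective hf, LieSubmodule.lie_sup, lie_ker, sup_bot_eq,
    LieSubmodule.lie_comm, lie_lie_comap]

theorem comap_lie_self_inf_lie_self_le_center (hf : Function.Surjective f)
    (hker : f.ker ≤ LieAlgebra.center R E) (hsum : A ⊔ B = ⊤) (hAB : ⁅A, B⁆ = ⊥) :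
    (⁅A, A⁆ ⊓ ⁅B, B⁆).comap f ≤ LieAlgebra.center R E := by
  have hBA : ⁅B, A⁆ = ⊥ := by rw [LieSubmodule.lie_comm, hAB]
  have comap_sup : A.comap f ⊔ B.comap f = ⊤ := by
    rw [← lieIdeal_comap_sup_of_surjective hf, hsum]; rfl
  rw [LieModule.le_max_triv_iff_bracket_eq_bot, ← comap_sup, LieSubmodule.sup_lie, eq_bot_iff,
    sup_le_iff]
  constructor
  · rw [← lie_comap_comap_lie_eq_bot hf hker hBA hBA]
    exact LieSubmodule.mono_lie_right _ (LieIdeal.comap_mono inf_le_right)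
  · rw [← lie_comap_comap_lie_eq_bot hf hker hAB hAB]
    exact LieSubmodule.mono_lie_right _ (LieIdeal.comap_mono inf_le_left)

theorem lie_self_inf_lie_self_eq_bot (hf : Function.Surjective f)
    (hker : f.ker = LieAlgebra.center R E) (hsum : A ⊔ B = ⊤) (hAB : ⁅A, B⁆ = ⊥) :
    ⁅A, A⁆ ⊓ ⁅B, B⁆ = ⊥ := by
  have comap_le_ker := comap_lie_self_inf_lie_self_le_center hf hker.le hsum hAB
  rw [← hker] at comap_le_ker
  rw [LieSubmodule.eq_bot_iff]
  intro x hx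
  obtain ⟨e, rfl⟩ := hf x
  exact f.mem_ker.mp (comap_le_ker (LieIdeal.mem_comap.mpr hx))

end CentralExtension

section CentralQuotient

variable {R E L : Type*} [CommRing R] [LieRing E] [LieAlgebra R E] [LieRing L] [LieAlgebra R L]

/-- The canonical projection `E → E ⧸ I` as a morphism of Lie algebras, whereas
`LieSubmodule.Quotient.mk'` is a morphism of Lie modules over `E`. -/
def lieQuotientMk (I : LieIdeal R E) : E →ₗ⁅R⁆ E ⧸ I :=
  { (LieSubmodule.Quotient.mk' I : E →ₗ[R] E ⧸ I) with
    map_lie' := fun {x y} => LieSubmodule.Quotient.mk_bracket I x y }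

theorem lieQuotientMk_surjective (I : LieIdeal R E) : Function.Surjective (lieQuotientMk I) :=
  LieSubmodule.Quotient.surjective_mk' I

theorem ker_lieQuotientMk (I : LieIdeal R E) : (lieQuotientMk I).ker = I := by
  ext x
  exact (lieQuotientMk I).mem_ker.trans (LieSubmodule.Quotient.mk_eq_zero I)

theorem ker_equiv_comp {E' : Type*} [LieRing E'] [LieAlgebra R E'] (e : E' ≃ₗ⁅R⁆ L)
    (f : E →ₗ⁅R⁆ E') : ((e : E' →ₗ⁅R⁆ L).comp f).ker = f.ker := by
  ext x
  simp only [LieHom.mem_ker, LieHom.comp_apply, LieEquiv.coe_toLieHom]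
  exact map_eq_zero_iff e e.injective

theorem central_product_not_capable_general {A B : LieIdeal R L} (hsum : A ⊔ B = ⊤)
    (hcomm : ⁅A, B⁆ = ⊥) (hder : ⁅A, A⁆ ⊓ ⁅B, B⁆ ≠ ⊥) :
    IsEmpty (L ≃ₗ⁅R⁆ E ⧸ LieAlgebra.center R E) := by
  refine ⟨fun e => hder ?_⟩
  let f : E →ₗ⁅R⁆ L :=
    (e.symm : (E ⧸ LieAlgebra.center R E) →ₗ⁅R⁆ L).comp (lieQuotientMk (LieAlgebra.center R E))
  have hf : Function.Surjective f := e.symm.surjective.comp (lieQuotientMk_surjective _)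
  have hker : f.ker = LieAlgebra.center R E := by rw [ker_equiv_comp, ker_lieQuotientMk]
  exact lie_self_inf_lie_self_eq_bot hf hker hsum hcomm

end CentralQuotient

/-- A central product `L = A ∔ B` with `[A,A] ∩ [B,B] ≠ 0` is not capable. -/
theorem central_product_not_capable
    (F L : Type u) [Field F] [LieRing L] [LieAlgebra F L] [FiniteDimensional F L]
    (A B : LieIdeal F L)
    (hsum : A ⊔ B = ⊤)
    (hcomm : ⁅A, B⁆ = (⊥ : LieIdeal F L))
    (hint : A ⊓ B ≤ LieAlgebra.center F L)
    (hder : ⁅A, A⁆ ⊓ ⁅B, B⁆ ≠ (⊥ : LieIdeal F L)) :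
    ¬ IsCapable F L := by
  rintro ⟨⟨E, e⟩⟩
  exact (central_product_not_capable_general hsum hcomm hder).false e
end

section
/- Let L be a 7-dimensional Lie algebra over a field F of characteristic 2 which is a generalized Heisenberg Lie algebra of rank 2, i.e. [L,L] = Z(L) and dim [L,L] = 2. Then L is isomorphic to the Lie algebra with basis x₁,…,x₇ and nonzero brackets [x₁,x₂] = x₆ = [x₃,x₄], [x₁,x₅] = x₇ = [x₂,x₃], or to the Lie algebra with basis x₁,…,x₇ and nonzero brackets [x₁,x₂] = x₆, [x₁,x₄] = x₇ = [x₃,x₅]. -/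
open Module

universe u

/-- `L` is isomorphic to `L₁ = 27A`: basis `x₁,…,x₇` with `[x₁,x₂]=x₆=[x₃,x₄]`, `[x₁,x₅]=x₇=[x₂,x₃]`. -/
def IsL1 (F : Type u) (L : Type u) [Field F] [LieRing L] [LieAlgebra F L] : Prop :=
  ∃ b : Basis (Fin 7) F L,
    ⁅b 0, b 1⁆ = b 5 ∧
    ⁅b 2, b 3⁆ = b 5 ∧
    ⁅b 0, b 4⁆ = b 6 ∧
    ⁅b 1, b 2⁆ = b 6 ∧
    ∀ i j : Fin 7, i < j → (i, j) ≠ (0, 1) → (i, j) ≠ (2, 3) → (i, j) ≠ (0, 4) → (i, j) ≠ (1, 2) → ⁅b i, b j⁆ = 0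

/-- `L` is isomorphic to `L₂ = 27B`: basis `x₁,…,x₇` with `[x₁,x₂]=x₆`, `[x₁,x₄]=x₇=[x₃,x₅]`. -/
def IsL2 (F : Type u) (L : Type u) [Field F] [LieRing L] [LieAlgebra F L] : Prop :=
  ∃ b : Basis (Fin 7) F L,
    ⁅b 0, b 1⁆ = b 5 ∧
    ⁅b 0, b 3⁆ = b 6 ∧
    ⁅b 2, b 4⁆ = b 6 ∧
    ∀ i j : Fin 7, i < j → (i, j) ≠ (0, 1) → (i, j) ≠ (0, 3) → (i, j) ≠ (2, 4) → ⁅b i, b j⁆ = 0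

/-!
On a complement of the centre of `L` the bracket is an alternating map `B : V × V → Z` with
`dim V = 5`, `dim Z = 2` and no common radical, that is, a pencil of alternating forms `φ ∘ B`. An
alternating form has even rank, so the radical of each `φ ∘ B` has odd dimension.

If for some `φ ≠ 0` this dimension is at least `3`, then `B` takes values in the line `ker φ` on the
radical, which is too large to be isotropic; splitting off a hyperbolic pair inside it leaves `L₂`.

Otherwise every radical is a line. Let `u` and `v` span the radicals of the coordinate forms for a
basis `e₀, e₁` of `Z`, so that `B u y = f y • e₁` and `B v y = g y • e₀` for functionals `f`, `g`.
These are independent, since otherwise some `φ ∘ B` would have a radical of dimension at least `2`.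
Pairing `u`, `v` and a third vector of `ker f ∩ ker g` with a pair dual to `f, g` gives `L₁`.
-/

section AlternatingForms

variable {F V : Type*} [Field F] [AddCommGroup V] [Module F V]

lemma finrank_ker_inf_ker_add_two [FiniteDimensional F V] {f g : Dual F V} {p q : V}
    (hfp : f p = 0) (hfq : f q ≠ 0) (hgp : g p ≠ 0) :
    finrank F ↥(f.ker ⊓ g.ker) + 2 = finrank F V := by
  have hsurj : (f.prod g).range = ⊤ := by
    refine LinearMap.range_eq_top.2 fun ⟨a, b⟩ ↦
      ⟨((b - a / f q * g q) / g p) • p + (a / f q) • q, ?_⟩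
    simp [hfp, hfq, hgp]
  have := (f.prod g).finrank_range_add_finrank_ker
  rw [hsurj, finrank_top, finrank_prod, finrank_self, LinearMap.ker_prod] at this
  omega

variable {A : V →ₗ[F] V →ₗ[F] F}

lemma mem_ker_of_forall_orthogonal (hA : A.IsAlt) {p q x : V} (hpq : A p q = 1)
    (hpx : A p x = 0) (hqx : A q x = 0)
    (hx : ∀ y, A p y = 0 → A q y = 0 → A x y = 0) : x ∈ A.ker := by
  have hqp : A q p = -1 := by rw [← hA.neg, hpq]
  have hxp : A x p = 0 := hA.eq_iff.1 hpx
  have hxq : A x q = 0 := hA.eq_iff.1 hqx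
  refine LinearMap.mem_ker.2 (LinearMap.ext fun y ↦ ?_)
  have := hx (y - A p y • q + A q y • p) (by simp [hpq, hA p]) (by simp [hqp, hA q])
  simpa [hxp, hxq] using this

theorem even_finrank_range_of_isAlt [FiniteDimensional F V] (hA : A.IsAlt) :
    Even (finrank F A.range) := by
  induction hn : finrank F V using Nat.strong_induction_on generalizing V with
  | _ n ih =>
  rcases eq_or_ne A 0 with rfl | h0
  · rw [LinearMap.range_zero, finrank_bot]
    exact Even.zero
  obtain ⟨p, hp⟩ := DFunLike.ne_iff.1 h0
  obtain ⟨q, hpq⟩ := LinearMap.surjective hp 1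
  set W := (A p).ker ⊓ (A q).ker
  have hW : finrank F W + 2 = finrank F V :=
    finrank_ker_inf_ker_add_two (p := p) (q := q) (hA p) (by simp [hpq])
      (by simp [← hA.neg p q, hpq])
  have hker : (A.domRestrict₁₂ W W).ker.map W.subtype = A.ker := by
    ext x
    constructor
    · rintro ⟨x, hx, rfl⟩
      exact mem_ker_of_forall_orthogonal hA hpq x.2.1 x.2.2 fun y hpy hqy ↦
        DFunLike.congr_fun (LinearMap.mem_ker.1 hx) ⟨y, hpy, hqy⟩
    · intro hx
      have hAx (y : V) : A x y = 0 := by rw [LinearMap.mem_ker.1 hx, LinearMap.zero_apply]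
      exact ⟨⟨x, hA.eq_iff.1 (hAx p), hA.eq_iff.1 (hAx q)⟩,
        LinearMap.mem_ker.2 (LinearMap.ext fun y ↦ hAx y), rfl⟩
  have hkerW := Submodule.finrank_map_subtype_eq W (A.domRestrict₁₂ W W).ker
  rw [hker] at hkerW
  have hevenW := ih (finrank F W) (by omega) (A := A.domRestrict₁₂ W W) (fun x ↦ hA x) rfl
  have hrankW := (A.domRestrict₁₂ W W).finrank_range_add_finrank_ker
  have hrank := A.finrank_range_add_finrank_ker
  grind

theorem odd_finrank_ker_of_isAlt (hA : A.IsAlt) (hV : Odd (finrank F V)) :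
    Odd (finrank F A.ker) := by
  have : FiniteDimensional F V := finite_of_finrank_pos hV.pos
  have hrank := A.finrank_range_add_finrank_ker
  have heven := even_finrank_range_of_isAlt hA
  grind

end AlternatingForms

section Pencils

variable {F V Z : Type*} [Field F] [AddCommGroup V] [Module F V] [AddCommGroup Z] [Module F Z]

/-- The Gram matrix of the generators `x₁, …, x₅` of `L₁`, where `z = x₆` and `w = x₇`. -/
def gramL1 (z w : Z) : Matrix (Fin 5) (Fin 5) Z :=
  !![ 0,  z,  0, 0, w;
     -z,  0,  w, 0, 0;
      0, -w,  0, z, 0;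
      0,  0, -z, 0, 0;
     -w,  0,  0, 0, 0]

/-- The Gram matrix of the generators `x₁, …, x₅` of `L₂`, where `z = x₆` and `w = x₇`. -/
def gramL2 (z w : Z) : Matrix (Fin 5) (Fin 5) Z :=
  !![ 0, z,  0, w, 0;
     -z, 0,  0, 0, 0;
      0, 0,  0, 0, w;
     -w, 0,  0, 0, 0;
      0, 0, -w, 0, 0]

lemma linearIndependent_pair_of_dual_apply {φ : Dual F Z} {z w : Z} (hz : φ z ≠ 0) (hw : φ w = 0)
    (hw0 : w ≠ 0) : LinearIndependent F ![z, w] := by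
  refine LinearIndependent.pair_iff.2 fun s t hst ↦ ?_
  have hs : s = 0 := by simpa [hz, hw] using congrArg φ hst
  exact ⟨hs, by simpa [hs, hw0] using hst⟩

lemma exists_basis_coord_zero_eq (hZ : finrank F Z = 2) {φ : Dual F Z} (hφ : φ ≠ 0) :
    ∃ e : Basis (Fin 2) F Z, e.coord 0 = φ := by
  have : FiniteDimensional F Z := finite_of_finrank_pos (by omega)
  obtain ⟨z, hz⟩ := LinearMap.surjective hφ 1
  have hker := Dual.finrank_ker_add_one_of_ne_zero hφ
  obtain ⟨⟨w, hw⟩, hw0, -⟩ := finrank_eq_one_iff'.1 (show finrank F φ.ker = 1 by omega)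
  have hφw : φ w = 0 := hw
  have hzw : LinearIndependent F ![z, w] := linearIndependent_pair_of_dual_apply
    (φ := φ) (by simp [hz]) hφw fun h ↦ hw0 (Subtype.ext h)
  let e := basisOfLinearIndependentOfCardEqFinrank hzw (by simp [hZ])
  have he : ⇑e = ![z, w] := coe_basisOfLinearIndependentOfCardEqFinrank hzw _
  refine ⟨e, e.ext fun i ↦ ?_⟩
  rw [e.coord_apply, e.repr_self, he]
  fin_cases i <;> simp [hz, hφw]

lemma coord_smul_add_coord_smul (e : Basis (Fin 2) F Z) (z : Z) :
    e.coord 0 z • e 0 + e.coord 1 z • e 1 = z := by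
  rw [← Fin.sum_univ_two fun k ↦ e.coord k z • e k]
  exact e.sum_repr z

lemma eq_coord_smul_of_coord_eq_zero (e : Basis (Fin 2) F Z) {i j : Fin 2} (hij : i ≠ j) {x : Z}
    (hx : e.coord i x = 0) : x = e.coord j x • e j := by
  have hsum := coord_smul_add_coord_smul e x
  obtain ⟨rfl, rfl⟩ | ⟨rfl, rfl⟩ : i = 0 ∧ j = 1 ∨ i = 1 ∧ j = 0 := by omega
  · rw [hx, zero_smul, zero_add] at hsum
    exact hsum.symm
  · rw [hx, zero_smul, add_zero] at hsum
    exact hsum.symm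

variable {B : V →ₗ[F] V →ₗ[F] Z}

lemma isAlt_compr₂ (hB : B.IsAlt) (φ : Dual F Z) : (B.compr₂ φ).IsAlt := fun x ↦ by
  rw [LinearMap.compr₂_apply, hB, map_zero]

lemma gram_eq_of_forall_lt (hB : B.IsAlt) {n : ℕ} {x : Fin n → V} {G : Matrix (Fin n) (Fin n) Z}
    (hdiag : ∀ i, G i i = 0) (hskew : ∀ i j, G j i = -G i j)
    (hlt : ∀ i j, i < j → B (x i) (x j) = G i j) (i j : Fin n) : B (x i) (x j) = G i j := by
  rcases lt_trichotomy i j with hij | rfl | hij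
  · exact hlt i j hij
  · rw [hB, hdiag]
  · rw [← hB.neg, hlt j i hij, ← hskew]

section RankTwo

variable {R : Submodule F V} {ψ : Dual F Z} {w : Z}

lemma two_mul_finrank_le_of_isotropic [FiniteDimensional F V] (hker : B.ker = ⊥)
    (hR : ∀ r ∈ R, ∀ y, B r y = ψ (B r y) • w) (hiso : ∀ r ∈ R, ∀ s ∈ R, ψ (B r s) = 0) :
    2 * finrank F R ≤ finrank F V := by
  let T : R →ₗ[F] R.dualAnnihilator :=
    ((B.compr₂ ψ).domRestrict R).codRestrict R.dualAnnihilator fun r ↦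
      (Submodule.mem_dualAnnihilator _).2 fun s hs ↦ hiso r r.2 s hs
  have hT : Function.Injective T := by
    refine (injective_iff_map_eq_zero T).2 fun r hr ↦ Subtype.ext ?_
    have hBr : B r = 0 := LinearMap.ext fun y ↦ by
      have : ψ (B r y) = 0 := DFunLike.congr_fun (congrArg Subtype.val hr) y
      rw [hR r r.2, this, zero_smul, LinearMap.zero_apply]
    exact LinearMap.ker_eq_bot'.1 hker r hBr
  have hle := LinearMap.finrank_le_finrank_of_injective hT
  have hsum := Subspace.finrank_add_finrank_dualAnnihilator_eq R
  omega

lemma exists_apply_eq_of_finrank_lt [FiniteDimensional F V] (hker : B.ker = ⊥)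
    (hR : ∀ r ∈ R, ∀ y, B r y = ψ (B r y) • w) (hdim : finrank F V < 2 * finrank F R) :
    ∃ r ∈ R, ∃ s ∈ R, B r s = w := by
  contrapose! hdim
  refine two_mul_finrank_le_of_isotropic hker hR fun r hr s hs ↦ ?_
  by_contra hrs
  refine hdim r hr ((ψ (B r s))⁻¹ • s) (R.smul_mem _ hs) ?_
  rw [map_smul, ← inv_smul_smul₀ hrs w, ← hR r hr]

lemma exists_mem_radical_of_odd_finrank (hB : B.IsAlt)
    (hR : ∀ r ∈ R, ∀ y, B r y = ψ (B r y) • w) (hodd : Odd (finrank F R)) :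
    ∃ t ∈ R, t ≠ 0 ∧ ∀ s ∈ R, B t s = 0 := by
  have : FiniteDimensional F R := finite_of_finrank_pos hodd.pos
  have halt : ((B.compr₂ ψ).domRestrict₁₂ R R).IsAlt := fun r ↦ isAlt_compr₂ hB ψ r
  obtain ⟨⟨t, ht⟩, ht0⟩ := finrank_pos_iff_exists_ne_zero.1
    (odd_finrank_ker_of_isAlt halt hodd).pos
  refine ⟨t, t.2, by simpa using ht0, fun s hs ↦ ?_⟩
  have : ψ (B t s) = 0 := DFunLike.congr_fun (LinearMap.mem_ker.1 ht) ⟨s, hs⟩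
  rw [hR t t.2, this, zero_smul]

lemma exists_sub_mem_orthogonal (hB : B.IsAlt) (hR : ∀ r ∈ R, ∀ y, B r y = ψ (B r y) • w)
    {r s : V} (hr : r ∈ R) (hs : s ∈ R) (hrs : B r s = w) (y : V) :
    ∃ y', y' - y ∈ R ∧ B y' r = 0 ∧ B y' s = 0 := by
  have hR' (r) (hr : r ∈ R) (y) : ψ (B y r) • w = B y r := by
    rw [← hB.neg r y, map_neg, neg_smul, ← hR r hr]
  have hsr : B s r = -w := by rw [← hB.neg, hrs]
  refine ⟨y - ψ (B y s) • r + ψ (B y r) • s, ?_, ?_, ?_⟩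
  · rw [sub_add, sub_sub_cancel_left, neg_sub]
    exact R.sub_mem (R.smul_mem _ hs) (R.smul_mem _ hr)
  · simp [hB r, hsr, hR' r hr]
  · simp [hB s, hrs, hR' s hs]

lemma exists_orthogonal_apply_eq (hB : B.IsAlt) (hker : B.ker = ⊥)
    (hR : ∀ r ∈ R, ∀ y, B r y = ψ (B r y) • w) {r s t : V} (hr : r ∈ R) (hs : s ∈ R)
    (hrs : B r s = w) (ht : t ∈ R) (ht0 : t ≠ 0) (htR : ∀ s ∈ R, B t s = 0) :
    ∃ p, B p r = 0 ∧ B p s = 0 ∧ B p t = w := by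
  have hBt : B.compr₂ ψ t ≠ 0 := fun h ↦ ht0 <| LinearMap.ker_eq_bot'.1 hker t <|
    LinearMap.ext fun y ↦ by rw [hR t ht, ← B.compr₂_apply, h]; simp
  obtain ⟨y, hy⟩ := LinearMap.surjective hBt (-1)
  obtain ⟨p, hpy, hpr, hps⟩ := exists_sub_mem_orthogonal hB hR hr hs hrs y
  have htp : B t p = B t y := sub_eq_zero.1 (by rw [← map_sub, htR _ hpy])
  refine ⟨p, hpr, hps, ?_⟩
  rw [← hB.neg, htp, hR t ht, ← B.compr₂_apply, hy, neg_one_smul, neg_neg]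

end RankTwo

theorem exists_gramL2_of_finrank_ker_ne_one (hB : B.IsAlt) (hker : B.ker = ⊥)
    (hV : finrank F V = 5) (e : Basis (Fin 2) F Z)
    (hrad : finrank F (B.compr₂ (e.coord 0)).ker ≠ 1) :
    ∃ (x : Fin 5 → V) (z w : Z), LinearIndependent F ![z, w] ∧
      ∀ i j, B (x i) (x j) = gramL2 z w i j := by
  have : FiniteDimensional F V := finite_of_finrank_pos (by omega)
  set R := (B.compr₂ (e.coord 0)).ker
  have hmemR {r : V} : r ∈ R ↔ ∀ y, e.coord 0 (B r y) = 0 := LinearMap.ext_iff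
  have hR (r) (hr : r ∈ R) (y) : B r y = e.coord 1 (B r y) • e 1 :=
    eq_coord_smul_of_coord_eq_zero e zero_ne_one (hmemR.1 hr y)
  have hodd : Odd (finrank F R) := odd_finrank_ker_of_isAlt (isAlt_compr₂ hB _) (by grind)
  obtain ⟨r, hr, s, hs, hrs⟩ := exists_apply_eq_of_finrank_lt hker hR (by grind)
  obtain ⟨t, ht, ht0, htR⟩ := exists_mem_radical_of_odd_finrank hB hR hodd
  obtain ⟨p, hpr, hps, hpt⟩ := exists_orthogonal_apply_eq hB hker hR hr hs hrs ht ht0 htR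
  obtain ⟨q, hqr, hqs, hqt, hpq⟩ :
      ∃ q, B q r = 0 ∧ B q s = 0 ∧ B q t = 0 ∧ e.coord 0 (B p q) ≠ 0 := by
    have hpR : p ∉ R := fun hp ↦ e.ne_zero 1 <| by rw [← hpt, hB.eq_iff.1 (htR p hp)]
    obtain ⟨y, hpy⟩ := not_forall.1 (mt hmemR.2 hpR)
    obtain ⟨q, hqy, hqr, hqs⟩ := exists_sub_mem_orthogonal hB hR hr hs hrs y
    have hpq : e.coord 0 (B p q) = e.coord 0 (B p y) := by
      rw [← sub_eq_zero, ← map_sub, ← map_sub, ← hB.neg, map_neg, hmemR.1 hqy, neg_zero]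
    refine ⟨q + e.coord 1 (B t q) • p, ?_, ?_, ?_, ?_⟩
    · simp [hqr, hpr]
    · simp [hqs, hps]
    · rw [map_add, map_smul, LinearMap.add_apply, LinearMap.smul_apply, hpt, ← hR t ht,
        ← hB.neg t q, neg_add_cancel]
    · rwa [map_add, map_smul, hB, smul_zero, add_zero, hpq]
  refine ⟨![p, q, r, t, s], B p q, e 1,
    linearIndependent_pair_of_dual_apply hpq (by simp) (e.ne_zero 1),
    gram_eq_of_forall_lt hB ?_ ?_ ?_⟩
  · intro i; fin_cases i <;> rfl
  · intro i j; fin_cases i <;> fin_cases j <;> simp [gramL2]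
  · have hrt : B r t = 0 := hB.eq_iff.1 (htR r hr)
    have hts : B t s = 0 := htR s hs
    intro i j hij
    fin_cases i <;> fin_cases j <;>
      first | rfl | assumption | exact absurd hij (by decide)

lemma finrank_map_add_finrank_inf_ker {W : Type*} [AddCommGroup W] [Module F W]
    [FiniteDimensional F V] (T : V →ₗ[F] W) (N : Submodule F V) :
    finrank F (N.map T) + finrank F ↥(N ⊓ T.ker) = finrank F N := by
  rw [← (T.domRestrict N).finrank_range_add_finrank_ker, LinearMap.range_domRestrict,
    LinearMap.ker_domRestrict, ← Submodule.finrank_map_subtype_eq N, Submodule.map_comap_subtype]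

-- For `c ∈ ker f` outside `U`, the image of `ker f` under `B c` is a proper subspace of `Z`. If `φ`
-- vanishes on it, then `φ ∘ B` maps `U + F c` into the line spanned by `f`.
lemma exists_dual_ne_zero_finrank_le_finrank_ker [FiniteDimensional F V] (hB : B.IsAlt)
    {f : Dual F V} (hf : f ≠ 0) {U : Submodule F V} (hUf : U < f.ker)
    (hU : ∀ x ∈ U, ∀ y ∈ f.ker, B x y = 0) (hdim : finrank F V < finrank F U + 2 + finrank F Z) :
    ∃ φ : Dual F Z, φ ≠ 0 ∧ finrank F U ≤ finrank F (B.compr₂ φ).ker := by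
  obtain ⟨c, hcf, hcU⟩ := SetLike.exists_of_lt hUf
  set N := U ⊔ F ∙ c
  have hN : finrank F U < finrank F N := Submodule.finrank_lt_finrank_of_lt <|
    left_lt_sup.2 <| (Submodule.span_singleton_le_iff_mem c U).not.2 hcU
  have hNc : N ≤ f.ker ⊓ (B c).ker := by
    refine sup_le (fun x hx ↦ ⟨hUf.le hx, ?_⟩) ?_
    · exact LinearMap.mem_ker.2 (hB.eq_iff.1 (hU x hx c hcf))
    · exact (Submodule.span_singleton_le_iff_mem _ _).2 ⟨hcf, hB c⟩
  have hrange : (f.ker.map (B c)) < ⊤ := by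
    refine Submodule.lt_top_of_finrank_lt_finrank ?_
    have h1 := finrank_map_add_finrank_inf_ker (B c) f.ker
    have h2 := Submodule.finrank_mono hNc
    have h3 := Dual.finrank_ker_add_one_of_ne_zero hf
    omega
  obtain ⟨φ, hφ, hφc⟩ := Submodule.exists_dual_map_eq_bot_of_lt_top hrange inferInstance
  refine ⟨φ, hφ, ?_⟩
  have hφc' (y) (hy : y ∈ f.ker) : φ (B c y) = 0 := by
    rw [← Submodule.mem_bot F, ← hφc]
    exact Submodule.mem_map_of_mem (Submodule.mem_map_of_mem hy)
  have hNf : N.map (B.compr₂ φ) ≤ F ∙ f := by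
    rw [Submodule.map_le_iff_le_comap]
    have hmem {x : V} (hx : ∀ y ∈ f.ker, φ (B x y) = 0) : x ∈ (F ∙ f).comap (B.compr₂ φ) := by
      simpa using mem_span_of_iInf_ker_le_ker (L := fun _ : Unit ↦ f) (K := B.compr₂ φ x)
        ((iInf_le _ ()).trans fun y hy ↦ hx y hy)
    refine sup_le (fun x hx ↦ hmem fun y hy ↦ by rw [hU x hx y hy, map_zero]) ?_
    exact (Submodule.span_singleton_le_iff_mem _ _).2 (hmem hφc')
  have h1 := finrank_map_add_finrank_inf_ker (B.compr₂ φ) N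
  have h2 := Submodule.finrank_mono hNf
  have h3 := Submodule.finrank_mono (inf_le_right : N ⊓ (B.compr₂ φ).ker ≤ _)
  rw [finrank_span_singleton hf] at h2
  omega

lemma exists_ker_compr₂_coord_eq_span_singleton (e : Basis (Fin 2) F Z) {i j : Fin 2} (hij : i ≠ j)
    (hrad : finrank F (B.compr₂ (e.coord i)).ker = 1) :
    ∃ (u : V) (f : Dual F V), u ≠ 0 ∧ (B.compr₂ (e.coord i)).ker = F ∙ u ∧
      ∀ y, B u y = f y • e j := by
  obtain ⟨⟨u, hu⟩, hu0, hspan⟩ := finrank_eq_one_iff'.1 hrad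
  refine ⟨u, B.compr₂ (e.coord j) u, fun h ↦ hu0 (Subtype.ext h), le_antisymm ?_ ?_, fun y ↦ ?_⟩
  · intro x hx
    obtain ⟨c, hc⟩ := hspan ⟨x, hx⟩
    exact Submodule.mem_span_singleton.2 ⟨c, congrArg Subtype.val hc⟩
  · exact (Submodule.span_singleton_le_iff_mem _ _).2 hu
  · exact eq_coord_smul_of_coord_eq_zero e hij (DFunLike.congr_fun (LinearMap.mem_ker.1 hu) y)

section RankFour

variable {u v : V}

lemma finrank_span_pair (huv : LinearIndependent F ![u, v]) :
    finrank F (Submodule.span F {u, v}) = 2 := by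
  rw [← Matrix.range_cons_cons_empty u v ![], finrank_span_eq_card huv, Fintype.card_fin]

variable {f g : Dual F V}

lemma exists_dual_apply_eq_one_of_finrank_ker_le_one (hB : B.IsAlt)
    (hV : finrank F V = 5) (hZ : finrank F Z = 2)
    (hrad : ∀ φ : Dual F Z, φ ≠ 0 → finrank F (B.compr₂ φ).ker ≤ 1) {z w : Z}
    (huv : LinearIndependent F ![u, v]) (hu : ∀ y, B u y = f y • z) (hv : ∀ y, B v y = g y • w)
    (hf : f ≠ 0) (hfu : f u = 0) (hfv : f v = 0) : ∃ p, f p = 0 ∧ g p = 1 := by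
  have : FiniteDimensional F V := finite_of_finrank_pos (by omega)
  suffices hfg : ¬ f.ker ≤ g.ker by
    obtain ⟨p, hfp, hgp⟩ := SetLike.not_le_iff_exists.1 hfg
    rw [LinearMap.mem_ker] at hfp hgp
    exact ⟨(g p)⁻¹ • p, by simp [hfp], by simp [hgp]⟩
  intro hfg
  have hrank := finrank_span_pair huv
  have hker := Dual.finrank_ker_add_one_of_ne_zero hf
  have hlt : Submodule.span F {u, v} < f.ker := by
    refine lt_of_le_of_ne (Submodule.span_le.2 ?_) fun h ↦ by rw [h] at hrank; omega
    exact Set.pair_subset hfu hfv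
  have hB0 (x) (hx : x ∈ Submodule.span F {u, v}) (y) (hy : y ∈ f.ker) : B x y = 0 := by
    obtain ⟨s, t, rfl⟩ := Submodule.mem_span_pair.1 hx
    have hfy : f y = 0 := hy
    have hgy : g y = 0 := hfg hy
    simp [hu, hv, hfy, hgy]
  obtain ⟨φ, hφ, hle⟩ := exists_dual_ne_zero_finrank_le_finrank_ker hB hf hlt hB0 (by omega)
  have := hrad φ hφ
  omega

lemma exists_notMem_span_pair_forall_apply_eq_add (hB : B.IsAlt) {z w : Z}
    (huv : LinearIndependent F ![u, v]) (hu : ∀ y, B u y = f y • z) (hv : ∀ y, B v y = g y • w)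
    (hfu : f u = 0) (hfv : f v = 0) (hgu : g u = 0) (hgv : g v = 0)
    (hfg : finrank F ↥(f.ker ⊓ g.ker) = 3) {p q : V}
    (hfp : f p = 1) (hgp : g p = 0) (hfq : f q = 0) (hgq : g q = 1) :
    ∃ c ∉ Submodule.span F {u, v}, ∀ y, B c y = f y • B c p + g y • B c q := by
  have : FiniteDimensional F ↥(f.ker ⊓ g.ker) := finite_of_finrank_pos (by omega)
  set U := Submodule.span F {u, v}
  have hU : finrank F U = 2 := finrank_span_pair huv
  have hUK : U ≤ f.ker ⊓ g.ker :=
    Submodule.span_le.2 <| Set.pair_subset ⟨hfu, hgu⟩ ⟨hfv, hgv⟩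
  obtain ⟨c, ⟨hfc, hgc⟩, hcU⟩ := SetLike.exists_of_lt <|
    lt_of_le_of_ne hUK fun h ↦ by rw [h] at hU; omega
  have hsup : U ⊔ F ∙ c = f.ker ⊓ g.ker := by
    have hle : U ⊔ F ∙ c ≤ f.ker ⊓ g.ker :=
      sup_le hUK <| (Submodule.span_singleton_le_iff_mem _ _).2 ⟨hfc, hgc⟩
    have hlt : U < U ⊔ F ∙ c := left_lt_sup.2 <| (Submodule.span_singleton_le_iff_mem c U).not.2 hcU
    have := Submodule.finiteDimensional_of_le hle
    have := Submodule.finrank_lt_finrank_of_lt hlt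
    exact Submodule.eq_of_le_of_finrank_le hle (by omega)
  have hcK : f.ker ⊓ g.ker ≤ (B c).ker := by
    rw [← hsup]
    refine sup_le (Submodule.span_le.2 <| Set.pair_subset ?_ ?_) <|
      (Submodule.span_singleton_le_iff_mem _ _).2 (hB c)
    · exact hB.eq_iff.1 (by rw [hu, hfc, zero_smul])
    · exact hB.eq_iff.1 (by rw [hv, hgc, zero_smul])
  refine ⟨c, hcU, fun y ↦ ?_⟩
  have hy : B c (y - f y • p - g y • q) = 0 :=
    hcK ⟨by simp [hfp, hfq], by simp [hgp, hgq]⟩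
  rwa [map_sub, map_sub, map_smul, map_smul, sub_sub, sub_eq_zero] at hy

lemma dual_ne_zero_of_forall_apply_eq_smul (hker : B.ker = ⊥) (hu0 : u ≠ 0) {z : Z}
    (hu : ∀ y, B u y = f y • z) : f ≠ 0 := by
  rintro rfl
  exact hu0 <| LinearMap.ker_eq_bot'.1 hker u <| LinearMap.ext fun y ↦ by simp [hu]

variable {e : Basis (Fin 2) F Z}

lemma dual_apply_eq_zero_of_isAlt (hB : B.IsAlt) (hu : ∀ y, B u y = f y • e 1)
    (hv : ∀ y, B v y = g y • e 0) : f u = 0 ∧ f v = 0 ∧ g u = 0 ∧ g v = 0 := by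
  have huv : f v • e 1 + g u • e 0 = 0 := by rw [← hu, ← hv, ← hB.neg v u, neg_add_cancel]
  refine ⟨?_, ?_, ?_, ?_⟩
  · simpa [e.ne_zero, hB u] using (hu u).symm
  · simpa using congrArg (e.coord 1) huv
  · simpa using congrArg (e.coord 0) huv
  · simpa [e.ne_zero, hB v] using (hv v).symm

lemma linearIndependent_pair_of_forall_apply_eq_smul (hker : B.ker = ⊥) (hu0 : u ≠ 0)
    (hv0 : v ≠ 0) (hu : ∀ y, B u y = f y • e 1) (hv : ∀ y, B v y = g y • e 0) :
    LinearIndependent F ![u, v] := by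
  refine (LinearIndependent.pair_iff' hu0).2 fun a ha ↦ hv0 <| LinearMap.ker_eq_bot'.1 hker v ?_
  refine LinearMap.ext fun y ↦ ?_
  have hy : a • f y • e 1 = g y • e 0 := by rw [← hu, ← hv, ← ha, map_smul, LinearMap.smul_apply]
  have hg : g y = 0 := by simpa using (congrArg (e.coord 0) hy).symm
  rw [hv, hg, zero_smul, LinearMap.zero_apply]

lemma exists_forall_apply_eq_smul_add_smul (hKu : (B.compr₂ (e.coord 0)).ker = F ∙ u)
    (hKv : (B.compr₂ (e.coord 1)).ker = F ∙ v) (hu : ∀ y, B u y = f y • e 1)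
    (hv : ∀ y, B v y = g y • e 0) {c : V} {z w : Z} (hcuv : c ∉ Submodule.span F {u, v})
    (hc : ∀ y, B c y = f y • z + g y • w) :
    ∃ (x : V) (a b : F), a ≠ 0 ∧ b ≠ 0 ∧ ∀ y, B x y = f y • a • e 0 + g y • b • e 1 := by
  set x := c - e.coord 1 z • u - e.coord 0 w • v with hx
  have hBx (y) : B x y = f y • e.coord 0 z • e 0 + g y • e.coord 1 w • e 1 := by
    have hcy := hc y
    rw [← coord_smul_add_coord_smul e z, ← coord_smul_add_coord_smul e w] at hcy
    rw [hx, map_sub, map_sub, map_smul, map_smul, LinearMap.sub_apply, LinearMap.sub_apply,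
      LinearMap.smul_apply, LinearMap.smul_apply, hcy, hu, hv]
    module
  have hxuv : x ∉ Submodule.span F {u, v} := fun h ↦ hcuv <| by
    simpa [hx, sub_sub] using add_mem h
      (Submodule.mem_span_pair.2 ⟨e.coord 1 z, e.coord 0 w, rfl⟩)
  refine ⟨x, _, _, fun ha ↦ hxuv ?_, fun hb ↦ hxuv ?_, hBx⟩
  · have : x ∈ F ∙ u := hKu ▸ LinearMap.mem_ker.2 (LinearMap.ext fun y ↦ by simp [hBx, ha])
    exact Submodule.span_mono (by simp) this
  · have : x ∈ F ∙ v := hKv ▸ LinearMap.mem_ker.2 (LinearMap.ext fun y ↦ by simp [hBx, hb])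
    exact Submodule.span_mono (by simp) this

lemma exists_gramL1_of_forall_apply_eq (hB : B.IsAlt) (hu : ∀ y, B u y = f y • e 1)
    (hv : ∀ y, B v y = g y • e 0) {x p q : V} {a b : F} (ha : a ≠ 0) (hb : b ≠ 0)
    (hx : ∀ y, B x y = f y • a • e 0 + g y • b • e 1)
    (hfp : f p = 1) (hgp : g p = 0) (hfq : f q = 0) (hgq : g q = 1) :
    ∃ (x : Fin 5 → V) (z w : Z), LinearIndependent F ![z, w] ∧
      ∀ i j, B (x i) (x j) = gramL1 z w i j := by
  obtain ⟨hfu, hfv, hgu, hgv⟩ := dual_apply_eq_zero_of_isAlt hB hu hv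
  have hvx : g x • e 0 = 0 := by rw [← hv, ← hB.neg, hx, hfv, hgv]; simp
  have hpu : B p u = -e 1 := by rw [← hB.neg, hu, hfp, one_smul]
  have hpv : B p v = 0 := by rw [← hB.neg, hv, hgp, zero_smul, neg_zero]
  have hqu : B q u = 0 := by rw [← hB.neg, hu, hfq, zero_smul, neg_zero]
  have hqv : B q v = -e 0 := by rw [← hB.neg, hv, hgq, one_smul]
  have hpx : B p x = -(a • e 0) := by rw [← hB.neg, hx, hfp, hgp]; simp
  -- The multiples of `u` and `v` added to `p` and `q` are chosen to cancel `B p q`.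
  have hpq : B (p - e.coord 0 (B p q) • v) (q + e.coord 1 (B p q) • u) = 0 := by
    conv_lhs => simp only [map_sub, map_add, map_smul, LinearMap.sub_apply, LinearMap.smul_apply,
      hpu, hv, hgu, hgq]
    nth_rw 1 [← coord_smul_add_coord_smul e (B p q)]
    module
  refine ⟨![p - e.coord 0 (B p q) • v, x, q + e.coord 1 (B p q) • u, a • v, -(b • u)],
    -(a • e 0), b • e 1, linearIndependent_pair_of_dual_apply (φ := e.coord 0) (by simpa)
    (by simp) (smul_ne_zero hb (e.ne_zero 1)), gram_eq_of_forall_lt hB ?_ ?_ ?_⟩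
  · intro i; fin_cases i <;> rfl
  · intro i j; fin_cases i <;> fin_cases j <;> simp [gramL1]
  · intro i j hij
    fin_cases i <;> fin_cases j <;>
      first
      | exact absurd hij (by decide)
      | exact hpq
      | simp [gramL1, hx, hu, hv, hfu, hfv, hgu, hgv, hvx, hpu, hpv, hqu, hqv, hpx, hfq, hgq]

end RankFour

theorem exists_gramL1_of_forall_finrank_ker_eq_one (hB : B.IsAlt) (hker : B.ker = ⊥)
    (hV : finrank F V = 5) (hZ : finrank F Z = 2)
    (hrad : ∀ φ : Dual F Z, φ ≠ 0 → finrank F (B.compr₂ φ).ker = 1) :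
    ∃ (x : Fin 5 → V) (z w : Z), LinearIndependent F ![z, w] ∧
      ∀ i j, B (x i) (x j) = gramL1 z w i j := by
  have : FiniteDimensional F Z := finite_of_finrank_pos (by omega)
  have : FiniteDimensional F V := finite_of_finrank_pos (by omega)
  let e : Basis (Fin 2) F Z := finBasisOfFinrankEq F Z hZ
  have hcoord (i) : e.coord i ≠ 0 := fun h ↦ by simpa using DFunLike.congr_fun h (e i)
  obtain ⟨u, f, hu0, hKu, hu⟩ :=
    exists_ker_compr₂_coord_eq_span_singleton e zero_ne_one (hrad _ (hcoord 0))
  obtain ⟨v, g, hv0, hKv, hv⟩ :=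
    exists_ker_compr₂_coord_eq_span_singleton e one_ne_zero (hrad _ (hcoord 1))
  have huv := linearIndependent_pair_of_forall_apply_eq_smul hker hu0 hv0 hu hv
  obtain ⟨hfu, hfv, hgu, hgv⟩ := dual_apply_eq_zero_of_isAlt hB hu hv
  have hf : f ≠ 0 := dual_ne_zero_of_forall_apply_eq_smul hker hu0 hu
  have hg : g ≠ 0 := dual_ne_zero_of_forall_apply_eq_smul hker hv0 hv
  obtain ⟨q, hfq, hgq⟩ := exists_dual_apply_eq_one_of_finrank_ker_le_one hB hV hZ
    (fun φ hφ ↦ (hrad φ hφ).le) huv hu hv hf hfu hfv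
  obtain ⟨p, hgp, hfp⟩ := exists_dual_apply_eq_one_of_finrank_ker_le_one hB hV hZ
    (fun φ hφ ↦ (hrad φ hφ).le) (LinearIndependent.pair_symm_iff.1 huv) hv hu hg hgv hgu
  have hfg := finrank_ker_inf_ker_add_two (p := q) (q := p) (g := g) hfq (by simp [hfp])
    (by simp [hgq])
  obtain ⟨c, hcuv, hc⟩ := exists_notMem_span_pair_forall_apply_eq_add hB huv hu hv
    hfu hfv hgu hgv (by omega) hfp hgp hfq hgq
  obtain ⟨x, a, b, ha, hb, hx⟩ := exists_forall_apply_eq_smul_add_smul hKu hKv hu hv hcuv hc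
  exact exists_gramL1_of_forall_apply_eq hB hu hv ha hb hx hfp hgp hfq hgq

theorem exists_gramL1_or_exists_gramL2 (hB : B.IsAlt) (hker : B.ker = ⊥)
    (hV : finrank F V = 5) (hZ : finrank F Z = 2) :
    ∃ (x : Fin 5 → V) (z w : Z), LinearIndependent F ![z, w] ∧
      ((∀ i j, B (x i) (x j) = gramL1 z w i j) ∨ ∀ i j, B (x i) (x j) = gramL2 z w i j) := by
  by_cases hrad : ∀ φ : Dual F Z, φ ≠ 0 → finrank F (B.compr₂ φ).ker = 1
  · obtain ⟨x, z, w, hzw, hx⟩ := exists_gramL1_of_forall_finrank_ker_eq_one hB hker hV hZ hrad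
    exact ⟨x, z, w, hzw, .inl hx⟩
  · push Not at hrad
    obtain ⟨φ, hφ, hrad⟩ := hrad
    obtain ⟨e, rfl⟩ := exists_basis_coord_zero_eq hZ hφ
    obtain ⟨x, z, w, hzw, hx⟩ := exists_gramL2_of_finrank_ker_ne_one hB hker hV e hrad
    exact ⟨x, z, w, hzw, .inr hx⟩

end Pencils

section Nondegenerate

variable {F Z : Type*} [Field F] [AddCommGroup Z] [Module F Z] {z w : Z}

lemma gramL1_nondegenerate (hzw : LinearIndependent F ![z, w]) (c : Fin 5 → F)
    (hc : ∀ i, ∑ j, c j • gramL1 z w i j = 0) : c = 0 := by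
  have hzw0 (s t : F) (h : s • z + t • w = 0) : s = 0 ∧ t = 0 :=
    LinearIndependent.pair_iff.1 hzw s t h
  have h0 := hzw0 (c 1) (c 4) (by simpa [Fin.sum_univ_five, gramL1] using hc 0)
  have h1 := hzw0 (-c 0) (c 2) (by simpa [Fin.sum_univ_five, gramL1] using hc 1)
  have h2 := hzw0 (c 3) (-c 1) (by simpa [Fin.sum_univ_five, gramL1, add_comm] using hc 2)
  ext i
  fin_cases i
  · exact neg_eq_zero.1 h1.1
  · exact h0.1
  · exact h1.2
  · exact h2.1
  · exact h0.2

lemma gramL2_nondegenerate (hzw : LinearIndependent F ![z, w]) (c : Fin 5 → F)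
    (hc : ∀ i, ∑ j, c j • gramL2 z w i j = 0) : c = 0 := by
  have hzw0 (s t : F) (h : s • z + t • w = 0) : s = 0 ∧ t = 0 :=
    LinearIndependent.pair_iff.1 hzw s t h
  have hw : w ≠ 0 := hzw.ne_zero 1
  have h0 := hzw0 (c 1) (c 3) (by simpa [Fin.sum_univ_five, gramL2] using hc 0)
  have h2 : c 4 = 0 := by simpa [Fin.sum_univ_five, gramL2, hw] using hc 2
  have h3 : c 0 = 0 := by simpa [Fin.sum_univ_five, gramL2, hw] using hc 3
  have h4 : c 2 = 0 := by simpa [Fin.sum_univ_five, gramL2, hw] using hc 4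
  ext i
  fin_cases i
  · exact h3
  · exact h0.1
  · exact h4
  · exact h0.2
  · exact h2

end Nondegenerate

section LieAlgebras

variable {F L : Type*} [Field F] [LieRing L] [LieAlgebra F L]

lemma lie_eq_zero_of_mem_center {z : L} (hz : z ∈ LieAlgebra.center F L) (x : L) : ⁅x, z⁆ = 0 :=
  (LieModule.mem_maxTrivSubmodule F L L z).1 hz x

lemma linearIndependent_sumElim_of_lie {ι κ : Type*} [Fintype ι] [Finite κ] {x : ι → L}
    {y : κ → L} (hyc : ∀ k, y k ∈ LieAlgebra.center F L) (hy : LinearIndependent F y)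
    (hx : ∀ c : ι → F, (∀ i, ∑ j, c j • ⁅x i, x j⁆ = 0) → c = 0) :
    LinearIndependent F (Sum.elim x y) := by
  cases nonempty_fintype κ
  refine Fintype.linearIndependent_iff.2 fun c hc ↦ ?_
  rw [Fintype.sum_sum_type] at hc
  simp only [Sum.elim_inl, Sum.elim_inr] at hc
  have hcl : c ∘ Sum.inl = 0 := hx _ fun i ↦ by
    have := congrArg (⁅x i, ·⁆) hc
    simpa only [Function.comp_apply, lie_add, lie_sum, lie_smul,
      lie_eq_zero_of_mem_center (hyc _), smul_zero, Finset.sum_const_zero, add_zero,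
      lie_zero] using this
  have hcl' (i) : c (Sum.inl i) = 0 := congrFun hcl i
  have hcr := Fintype.linearIndependent_iff.1 hy (c ∘ Sum.inr) (by simpa [hcl'] using hc)
  exact Sum.rec hcl' hcr

lemma exists_basis_of_lie (hL : finrank F L = 7) {x : Fin 5 → L} {z w : LieAlgebra.center F L}
    (hzw : LinearIndependent F ![z, w])
    (hx : ∀ c : Fin 5 → F, (∀ i, ∑ j, c j • ⁅x i, x j⁆ = 0) → c = 0) :
    ∃ b : Basis (Fin 7) F L, (∀ i : Fin 5, b (i.castAdd 2) = x i) ∧ b 5 = z ∧ b 6 = w := by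
  have hli := linearIndependent_sumElim_of_lie (y := Subtype.val ∘ ![z, w])
    (fun k ↦ (![z, w] k).2)
    (hzw.map' (LieAlgebra.center F L).toSubmodule.subtype (Submodule.ker_subtype _)) hx
  let b := basisOfLinearIndependentOfCardEqFinrank hli (by simp [hL])
  refine ⟨b.reindex finSumFinEquiv, fun i ↦ ?_, ?_, ?_⟩ <;> rw [b.reindex_apply]
  · rw [finSumFinEquiv_symm_apply_castAdd, coe_basisOfLinearIndependentOfCardEqFinrank]
    rfl
  · rw [show (5 : Fin 7) = Fin.natAdd 5 (0 : Fin 2) from rfl, finSumFinEquiv_symm_apply_natAdd,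
      coe_basisOfLinearIndependentOfCardEqFinrank]
    rfl
  · rw [show (6 : Fin 7) = Fin.natAdd 5 (1 : Fin 2) from rfl, finSumFinEquiv_symm_apply_natAdd,
      coe_basisOfLinearIndependentOfCardEqFinrank]
    rfl

lemma lie_eq_zero_of_gram_eq_zero {b : Basis (Fin 7) F L} {z w : LieAlgebra.center F L}
    (h5 : b 5 = z) (h6 : b 6 = w) {s : Set (Fin 7 × Fin 7)}
    {G : Matrix (Fin 5) (Fin 5) (LieAlgebra.center F L)}
    (hb : ∀ i j : Fin 5, ⁅b (i.castAdd 2), b (j.castAdd 2)⁆ = G i j)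
    (hG : ∀ i j : Fin 5, i < j → (i.castAdd 2, j.castAdd 2) ∉ s → G i j = 0) (i j : Fin 7)
    (hij : i < j) (hs : (i, j) ∉ s) : ⁅b i, b j⁆ = 0 := by
  induction j using Fin.addCases (m := 5) (n := 2) with
  | right j =>
    fin_cases j
    · exact h5 ▸ lie_eq_zero_of_mem_center z.2 (b i)
    · exact h6 ▸ lie_eq_zero_of_mem_center w.2 (b i)
  | left j =>
    induction i using Fin.addCases (m := 5) (n := 2) with
    | right i =>
      exact absurd hij (by simp only [Fin.lt_def, Fin.val_natAdd, Fin.val_castAdd]; omega)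
    | left i => rw [hb, hG i j hij hs, ZeroMemClass.coe_zero]

end LieAlgebras

section Recognition

variable {F L : Type u} [Field F] [LieRing L] [LieAlgebra F L] {x : Fin 5 → L}
  {z w : LieAlgebra.center F L}

lemma isL1_of_lie_eq_gramL1 (hL : finrank F L = 7) (hzw : LinearIndependent F ![z, w])
    (hx : ∀ i j, ⁅x i, x j⁆ = gramL1 z w i j) : IsL1 F L := by
  obtain ⟨b, hbx, h5, h6⟩ := exists_basis_of_lie hL hzw (x := x) fun c hc ↦
    gramL1_nondegenerate hzw c fun i ↦ Subtype.ext <| by simpa [hx] using hc i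
  have hb (i j : Fin 5) : ⁅b (i.castAdd 2), b (j.castAdd 2)⁆ = gramL1 z w i j := by
    rw [hbx, hbx, hx]
  refine ⟨b, h5 ▸ hb 0 1, h5 ▸ hb 2 3, h6 ▸ hb 0 4, h6 ▸ hb 1 2, fun i j hij h01 h23 h04 h12 ↦ ?_⟩
  refine lie_eq_zero_of_gram_eq_zero h5 h6 (s := {(0, 1), (2, 3), (0, 4), (1, 2)}) hb
    (fun i j hij hs ↦ ?_) i j hij (by simp [*])
  fin_cases i <;> fin_cases j <;>
    first | rfl | exact absurd hij (by decide) | exact absurd hs (by simp)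

lemma isL2_of_lie_eq_gramL2 (hL : finrank F L = 7) (hzw : LinearIndependent F ![z, w])
    (hx : ∀ i j, ⁅x i, x j⁆ = gramL2 z w i j) : IsL2 F L := by
  obtain ⟨b, hbx, h5, h6⟩ := exists_basis_of_lie hL hzw (x := x) fun c hc ↦
    gramL2_nondegenerate hzw c fun i ↦ Subtype.ext <| by simpa [hx] using hc i
  have hb (i j : Fin 5) : ⁅b (i.castAdd 2), b (j.castAdd 2)⁆ = gramL2 z w i j := by
    rw [hbx, hbx, hx]
  refine ⟨b, h5 ▸ hb 0 1, h6 ▸ hb 0 3, h6 ▸ hb 2 4, fun i j hij h01 h03 h24 ↦ ?_⟩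
  refine lie_eq_zero_of_gram_eq_zero h5 h6 (s := {(0, 1), (0, 3), (2, 4)}) hb
    (fun i j hij hs ↦ ?_) i j hij (by simp [*])
  fin_cases i <;> fin_cases j <;>
    first | rfl | exact absurd hij (by decide) | exact absurd hs (by simp)

end Recognition

section Center

variable {F L : Type*} [Field F] [LieRing L] [LieAlgebra F L]

/-- The bracket of `L`, restricted to a subspace `W` and taking values in the centre. -/
def centralBracket (W : Submodule F L) (hL : ∀ x y : L, ⁅x, y⁆ ∈ LieAlgebra.center F L) :
    W →ₗ[F] W →ₗ[F] LieAlgebra.center F L :=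
  LinearMap.mk₂ F (fun x y ↦ ⟨⁅(x : L), (y : L)⁆, hL x y⟩)
    (fun _ _ _ ↦ Subtype.ext <| add_lie ..) (fun _ _ _ ↦ Subtype.ext <| smul_lie ..)
    (fun _ _ _ ↦ Subtype.ext <| lie_add ..) (fun _ _ _ ↦ Subtype.ext <| lie_smul ..)

variable {W : Submodule F L} (hL : ∀ x y : L, ⁅x, y⁆ ∈ LieAlgebra.center F L)

lemma isAlt_centralBracket : (centralBracket W hL).IsAlt := fun x ↦ Subtype.ext (lie_self (x : L))

lemma ker_centralBracket_eq_bot (hW : IsCompl (LieAlgebra.center F L).toSubmodule W) :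
    (centralBracket W hL).ker = ⊥ := by
  refine LinearMap.ker_eq_bot'.2 fun x hx ↦ ?_
  refine Subtype.ext <| Submodule.disjoint_def.1 hW.disjoint x ?_ x.2
  refine (LieModule.mem_maxTrivSubmodule F L L _).2 fun y ↦ ?_
  obtain ⟨z, hz, v, hv, rfl⟩ := Submodule.mem_sup.1 (hW.sup_eq_top ▸ Submodule.mem_top (x := y))
  have hvx : ⁅(x : L), v⁆ = 0 := congrArg Subtype.val (DFunLike.congr_fun hx (⟨v, hv⟩ : W))
  rw [← lie_skew, lie_add, lie_eq_zero_of_mem_center hz, hvx, add_zero, neg_zero]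

end Center

theorem gen_heisenberg_rank_two_dim_seven_char_two_general
    {F L : Type u} [Field F] [LieRing L] [LieAlgebra F L] (hdim : finrank F L = 7)
    (hle : LieModule.lowerCentralSeries F L L 1 ≤ LieAlgebra.center F L)
    (hcenter : finrank F (LieAlgebra.center F L) = 2) : IsL1 F L ∨ IsL2 F L := by
  have : FiniteDimensional F L := finite_of_finrank_pos (by omega)
  have hL (x y : L) : ⁅x, y⁆ ∈ LieAlgebra.center F L := hle <| by
    rw [LieModule.lowerCentralSeries_succ, LieModule.lowerCentralSeries_zero]
    exact LieSubmodule.lie_mem_lie (LieSubmodule.mem_top x) (LieSubmodule.mem_top y)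
  obtain ⟨W, hW⟩ := (LieAlgebra.center F L).toSubmodule.exists_isCompl
  have hWdim : finrank F W = 5 := by
    have hsum := Submodule.finrank_add_eq_of_isCompl hW
    have : finrank F (LieAlgebra.center F L).toSubmodule = 2 := hcenter
    omega
  obtain ⟨x, z, w, hzw, hx⟩ := exists_gramL1_or_exists_gramL2 (isAlt_centralBracket hL)
    (ker_centralBracket_eq_bot hL hW) hWdim hcenter
  exact hx.imp
    (fun hx ↦ isL1_of_lie_eq_gramL1 hdim hzw fun i j ↦ congrArg Subtype.val (hx i j))
    (fun hx ↦ isL2_of_lie_eq_gramL2 hdim hzw fun i j ↦ congrArg Subtype.val (hx i j))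

/-- A 7-dimensional generalized Heisenberg Lie algebra of rank 2 over a field of
characteristic 2 is isomorphic to `L₁` or `L₂`. -/
theorem gen_heisenberg_rank_two_dim_seven_char_two
    (F L : Type u) [Field F] [LieRing L] [LieAlgebra F L] [FiniteDimensional F L]
    (hchar : ringChar F = 2)
    (hdim : finrank F L = 7)
    (hgh : LieModule.lowerCentralSeries F L L 1 = LieAlgebra.center F L)
    (hder : finrank F ↥(LieModule.lowerCentralSeries F L L 1) = 2) :
    IsL1 F L ∨ IsL2 F L := by
  exact gen_heisenberg_rank_two_dim_seven_char_two_general hdim hgh.le (hgh ▸ hder)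
end
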